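/- arXiv:2110.08541 — 2 statements merged into one kernel-verified Lean document; each statement's English description precedes it below -/
import Mathlib

section
/- Let κ ∈ L¹(I) and let r ∈ L^∞(I, SO(3)) with rows r₁, r₂, r₃ be such that r₃ ∈ W^{1,1}(I, ℝ³). Then the following are equivalent: (i) for all t ∈ I, r₁(t) = cos(∫₀ᵗ κ) Π_{r₃|_(0,t)} r₁(0) + sin(∫₀ᵗ κ) Π_{r₃|_(0,t)} r₂(0); (ii) r ∈ W^{1,1}(I, SO(3)) and r₁' · r₂ = κ almost everywhere on I; (iii) r ∈ W^{1,1}(I, SO(3)) and there exist τ, μ ∈ L¹(I) such that, almost everywhere on I, r₁' = κ r₂ + μ r₃, r₂' = −κ r₁ + τ r₃, and r₃' = −μ r₁ − τ r₂. -/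
open MeasureTheory Set Filter Matrix
open scoped RealInnerProductSpace Topology ENNReal NNReal

noncomputable section

/-- Euclidean 3-space. -/
abbrev E3 : Type := EuclideanSpace ℝ (Fin 3)

/-- Cross product on `ℝ³`. -/
def cross3 (v w : E3) : E3 :=
  (WithLp.equiv 2 (Fin 3 → ℝ)).symm
    ![v 1 * w 2 - v 2 * w 1, v 2 * w 0 - v 0 * w 2, v 0 * w 1 - v 1 * w 0]

/-- The `i`-th row of a 3×3 matrix, as a vector in `ℝ³`; for `r ∈ SO(3)` this is `rᵀ eᵢ`. -/
def row3 (M : Matrix (Fin 3) (Fin 3) ℝ) (i : Fin 3) : E3 :=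
  (WithLp.equiv 2 (Fin 3 → ℝ)).symm (M i)

/-- The set of rotation matrices. -/
def SO3 : Set (Matrix (Fin 3) (Fin 3) ℝ) :=
  {M | M * Mᵀ = 1 ∧ M.det = 1}

/-- Lebesgue measure restricted to the unit interval `I = (0,1)`. -/
def muI : Measure ℝ := volume.restrict (Set.Ioo 0 1)

/-- `f` is absolutely continuous on `[a,b]` with (a.e.) derivative `f'` (fundamental theorem of
calculus form); this encodes `f ∈ W^{1,1}((a,b))` via its continuous representative. -/
def FTCOn (f f' : ℝ → E3) (a b : ℝ) : Prop :=
  IntervalIntegrable f' volume a b ∧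
  ∀ t ∈ Set.Icc a b, f t = f a + ∫ s in a..t, f' s

/-- `V` is the parallel transport of `v` along the spherical curve `β` (with derivative `β'`)
on `[a,b]`: the absolutely continuous solution of `V' = -(V·β')β`, `V a = v`, in integral form.
`V t` is the quantity denoted `Π_{β|_(a,t)} v`. -/
def IsParTrans (β β' : ℝ → E3) (a b : ℝ) (v : E3) (V : ℝ → E3) : Prop :=
  V a = v ∧
  IntervalIntegrable (fun s => ⟪V s, β' s⟫ • β s) volume a b ∧
  ∀ t ∈ Set.Icc a b, V t = v - ∫ s in a..t, ⟪V s, β' s⟫ • β s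

/-!
Rotating the first two vectors of an orthonormal frame by an absolutely continuous angle `θ` adds
`θ'` to its connection form `r₁' · r₂`. When the connection form vanishes, `r₁'` and `r₂'` are
orthogonal to both `r₁` and `r₂`, hence multiples of `r₃`, so that `r₁` and `r₂` are parallel along
`r₃`; conversely, parallel transport preserves inner products, so it carries a frame to a frame with
zero connection form. Hence `r` has connection form `κ` exactly when its rotation by `-∫₀ᵗ κ` is
parallel; since a rotation matrix is determined by two of its rows, this is the formula for `r₁`.
Expanding `rᵢ'` in the frame itself, where the coefficients `rᵢ' · rⱼ` are antisymmetric, turns the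
connection form condition into the frame equations.
-/

section AbsolutelyContinuous

variable {E F : Type*} [NormedAddCommGroup E] [NormedSpace ℝ E]
  [NormedAddCommGroup F] [NormedSpace ℝ F] {a b : ℝ}

/-- `f` is absolutely continuous on `[a, b]` with a.e. derivative `f'`: the analogue of `FTCOn` for
functions with values in an arbitrary normed space. -/
def HasACDerivOn (f f' : ℝ → E) (a b : ℝ) : Prop :=
  IntervalIntegrable f' volume a b ∧ ∀ t ∈ Icc a b, f t = f a + ∫ s in a..t, f' s

theorem ftcOn_iff_hasACDerivOn {f f' : ℝ → E3} : FTCOn f f' a b ↔ HasACDerivOn f f' a b :=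
  Iff.rfl

theorem absolutelyContinuousOnInterval_of_dist_le {X Y : Type*} [PseudoMetricSpace X]
    [PseudoMetricSpace Y] {f : ℝ → X} {g : ℝ → Y} {C : ℝ}
    (hg : AbsolutelyContinuousOnInterval g a b)
    (h : ∀ x ∈ uIcc a b, ∀ y ∈ uIcc a b, dist (f x) (f y) ≤ C * dist (g x) (g y)) :
    AbsolutelyContinuousOnInterval f a b := by
  refine squeeze_zero' (.of_forall fun _ => Finset.sum_nonneg fun _ _ => dist_nonneg) ?_
    (by simpa using Tendsto.const_mul C hg)
  filter_upwards [mem_inf_of_right (mem_principal_self _)] with I hI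
  rw [Finset.mul_sum]
  exact Finset.sum_le_sum fun i hi => h _ (hI.1 i hi).1 _ (hI.1 i hi).2

theorem intervalIntegrable_continuousOn_clm_apply {μ : Measure ℝ} {A : ℝ → E →L[ℝ] F} {f : ℝ → E}
    (hA : ContinuousOn A (uIcc a b)) (hf : IntervalIntegrable f μ a b) :
    IntervalIntegrable (fun t => A t (f t)) μ a b := by
  rw [intervalIntegrable_iff] at hf ⊢
  have hA_meas : AEStronglyMeasurable A (μ.restrict (uIoc a b)) :=
    (hA.mono uIoc_subset_uIcc).aestronglyMeasurable measurableSet_uIoc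
  obtain ⟨C, hC⟩ := isCompact_uIcc.exists_bound_of_continuousOn hA
  refine (hf.norm.const_mul C).mono'
    (isBoundedBilinearMap_apply.continuous.comp_aestronglyMeasurable
      (hA_meas.prodMk hf.aestronglyMeasurable)) ?_
  filter_upwards [ae_restrict_mem measurableSet_uIoc] with t ht
  exact (A t).le_of_opNorm_le (hC t (uIoc_subset_uIcc ht)) (f t)

namespace HasACDerivOn

variable {f f' g g' : ℝ → E}

theorem sub_eq_integral (hf : HasACDerivOn f f' a b) {x y : ℝ} (hx : x ∈ Icc a b)
    (hy : y ∈ Icc a b) : f x - f y = ∫ s in y..x, f' s := by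
  have hint : ∀ t ∈ Icc a b, IntervalIntegrable f' volume a t := fun t ht =>
    hf.1.mono_set (uIcc_subset_uIcc_left (Icc_subset_uIcc ht))
  rw [hf.2 x hx, hf.2 y hy, add_sub_add_left_eq_sub,
    intervalIntegral.integral_interval_sub_left (hint x hx) (hint y hy)]

protected theorem congr (hf : HasACDerivOn f f' a b) (hab : a ≤ b) (hfg : EqOn g f (Icc a b))
    (hfg' : ∀ᵐ t ∂volume.restrict (Ioo a b), g' t = f' t) : HasACDerivOn g g' a b := by
  refine ⟨?_, fun t ht => ?_⟩
  · rw [intervalIntegrable_iff_integrableOn_Ioo_of_le hab]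
    exact ((intervalIntegrable_iff_integrableOn_Ioo_of_le hab).1 hf.1).congr
      (hfg'.mono fun _ h => h.symm)
  · rw [hfg ht, hfg (left_mem_Icc.2 hab), hf.2 t ht]
    congr 1
    refine intervalIntegral.integral_congr_ae_restrict ?_
    rw [uIoc_of_le ht.1, ← restrict_Ioo_eq_restrict_Ioc]
    filter_upwards [ae_restrict_of_ae_restrict_of_subset (Ioo_subset_Ioo_right ht.2) hfg']
      with s hs using hs.symm

theorem eq_left_of_ae_eq_zero (hf : HasACDerivOn f f' a b) (hab : a ≤ b)
    (hf' : ∀ᵐ t ∂volume.restrict (Ioo a b), f' t = 0) {t : ℝ} (ht : t ∈ Icc a b) : f t = f a := by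
  have hzero : HasACDerivOn f (fun _ => 0) a b :=
    hf.congr hab (fun _ _ => rfl) (hf'.mono fun _ h => h.symm)
  simpa using hzero.2 t ht

theorem absolutelyContinuousOnInterval (hf : HasACDerivOn f f' a b) (hab : a ≤ b) :
    AbsolutelyContinuousOnInterval f a b := by
  refine absolutelyContinuousOnInterval_of_dist_le (C := 1)
    (hf.1.norm.absolutelyContinuousOnInterval_intervalIntegral left_mem_uIcc) fun x hx y hy => ?_
  have hint : ∀ t ∈ uIcc a b, IntervalIntegrable (fun s => ‖f' s‖) volume a t := fun t ht =>
    hf.1.norm.mono_set (uIcc_subset_uIcc_left ht)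
  rw [one_mul, dist_eq_norm, Real.dist_eq,
    intervalIntegral.integral_interval_sub_left (hint x hx) (hint y hy)]
  rw [uIcc_of_le hab] at hx hy
  rw [hf.sub_eq_integral hx hy]
  exact intervalIntegral.norm_integral_le_abs_integral_norm

theorem continuousOn (hf : HasACDerivOn f f' a b) (hab : a ≤ b) : ContinuousOn f (Icc a b) :=
  uIcc_of_le hab ▸ (hf.absolutelyContinuousOnInterval hab).continuousOn

protected theorem neg (hf : HasACDerivOn f f' a b) :
    HasACDerivOn (fun t => -f t) (fun t => -f' t) a b := by
  refine ⟨hf.1.neg, fun t ht => ?_⟩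
  change -f t = -f a + ∫ s in a..t, -f' s
  rw [intervalIntegral.integral_neg, hf.2 t ht, neg_add]

theorem const (c : E) : HasACDerivOn (fun _ => c) (fun _ => 0) a b :=
  ⟨intervalIntegrable_const, fun t _ => by simp⟩

theorem integral (hf' : IntervalIntegrable f' volume a b) :
    HasACDerivOn (fun t => ∫ s in a..t, f' s) f' a b :=
  ⟨hf', fun t _ => by simp⟩

variable [CompleteSpace E]

theorem ae_hasDerivAt (hf : HasACDerivOn f f' a b) :
    ∀ᵐ t ∂volume.restrict (Ioo a b), HasDerivAt f (f' t) t := by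
  rw [ae_restrict_iff' measurableSet_Ioo]
  filter_upwards [hf.1.ae_hasDerivAt_integral] with t hderiv ht
  refine ((hderiv (Ioo_subset_Icc_self.trans Icc_subset_uIcc ht) a left_mem_uIcc).const_add
    (f a)).congr_of_eventuallyEq ?_
  filter_upwards [Icc_mem_nhds ht.1 ht.2] with s hs using hf.2 s hs

theorem of_ae_hasDerivAt (hab : a ≤ b) (hf : AbsolutelyContinuousOnInterval f a b)
    (hf' : IntervalIntegrable f' volume a b)
    (hderiv : ∀ᵐ t ∂volume.restrict (Ioo a b), HasDerivAt f (f' t) t) :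
    HasACDerivOn f f' a b := by
  have hint := HasACDerivOn.integral hf'
  have hdiff : ∀ᵐ t, t ∈ uIcc a b → HasDerivAt (fun t => f t - ∫ s in a..t, f' s) 0 t := by
    rw [← ae_restrict_iff' measurableSet_uIcc, uIcc_of_le hab, ← restrict_Ioo_eq_restrict_Icc]
    filter_upwards [hderiv, hint.ae_hasDerivAt] with t hft hit
    simpa using hft.fun_sub hit
  obtain ⟨C, hC⟩ := (hf.sub (hint.absolutelyContinuousOnInterval hab)).const_of_ae_hasDerivAt_zero
    hdiff
  refine ⟨hf', fun t ht => ?_⟩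
  have hconst : f t - ∫ s in a..t, f' s = f a - ∫ s in a..a, f' s :=
    (hC t (Icc_subset_uIcc ht)).trans (hC a left_mem_uIcc).symm
  rw [intervalIntegral.integral_same, sub_zero] at hconst
  rw [← hconst, sub_add_cancel]

theorem ae_deriv_unique (hf : HasACDerivOn f f' a b) (hg : HasACDerivOn f g' a b) :
    ∀ᵐ t ∂volume.restrict (Ioo a b), f' t = g' t := by
  filter_upwards [hf.ae_hasDerivAt, hg.ae_hasDerivAt] with t hft hgt using hft.unique hgt

variable [CompleteSpace F]

theorem prodMk {h h' : ℝ → F} (hf : HasACDerivOn f f' a b) (hh : HasACDerivOn h h' a b) :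
    HasACDerivOn (fun t => (f t, h t)) (fun t => (f' t, h' t)) a b := by
  have hint : IntervalIntegrable (fun t => (f' t, h' t)) volume a b :=
    ⟨hf.1.1.prodMk hh.1.1, hf.1.2.prodMk hh.1.2⟩
  refine ⟨hint, fun t ht => ?_⟩
  have hint_t := hint.mono_set (uIcc_subset_uIcc_left (Icc_subset_uIcc ht))
  exact Prod.ext
    ((hf.2 t ht).trans (congrArg (f a + ·)
      ((ContinuousLinearMap.fst ℝ E F).intervalIntegral_comp_comm hint_t)))
    ((hh.2 t ht).trans (congrArg (h a + ·)
      ((ContinuousLinearMap.snd ℝ E F).intervalIntegral_comp_comm hint_t)))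

protected theorem comp {φ : E → F} (hab : a ≤ b) (hφ : ContDiff ℝ 1 φ)
    (hf : HasACDerivOn f f' a b) :
    HasACDerivOn (fun t => φ (f t)) (fun t => fderiv ℝ φ (f t) (f' t)) a b := by
  have hf_ac := hf.absolutelyContinuousOnInterval hab
  obtain ⟨K, hK⟩ := hφ.locallyLipschitz.locallyLipschitzOn.exists_lipschitzOnWith_of_compact
    (isCompact_uIcc.image_of_continuousOn hf_ac.continuousOn)
  refine of_ae_hasDerivAt hab ?_ ?_ ?_
  · exact absolutelyContinuousOnInterval_of_dist_le hf_ac fun x hx y hy =>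
      hK.dist_le_mul _ (mem_image_of_mem f hx) _ (mem_image_of_mem f hy)
  · exact intervalIntegrable_continuousOn_clm_apply
      ((hφ.continuous_fderiv one_ne_zero).comp_continuousOn hf_ac.continuousOn) hf.1
  · filter_upwards [hf.ae_hasDerivAt] with t ht
    exact (hφ.differentiable one_ne_zero _).hasFDerivAt.comp_hasDerivAt t ht

theorem cos_smul_add_sin_smul {θ θ' : ℝ → ℝ} (hab : a ≤ b) (hθ : HasACDerivOn θ θ' a b)
    (hf : HasACDerivOn f f' a b) (hg : HasACDerivOn g g' a b) :
    HasACDerivOn (fun t => Real.cos (θ t) • f t + Real.sin (θ t) • g t)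
      (fun t => θ' t • (Real.cos (θ t) • g t - Real.sin (θ t) • f t)
        + (Real.cos (θ t) • f' t + Real.sin (θ t) • g' t)) a b := by
  let φ : ℝ × E × E → E := fun p => Real.cos p.1 • p.2.1 + Real.sin p.1 • p.2.2
  have hφ : ContDiff ℝ 1 φ := by fun_prop
  have hderiv (p q : ℝ × E × E) : fderiv ℝ φ p q =
      q.1 • (Real.cos p.1 • p.2.2 - Real.sin p.1 • p.2.1)
        + (Real.cos p.1 • q.2.1 + Real.sin p.1 • q.2.2) := by
    have hfst : HasFDerivAt (fun p : ℝ × E × E => p.1) (.fst ℝ ℝ (E × E)) p := hasFDerivAt_fst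
    have hsnd : HasFDerivAt (fun p : ℝ × E × E => p.2) (.snd ℝ ℝ (E × E)) p := hasFDerivAt_snd
    have hφ' : HasFDerivAt φ _ p := (hfst.cos.smul hsnd.fst).add (hfst.sin.smul hsnd.snd)
    rw [hφ'.fderiv]
    simp only [_root_.add_apply, _root_.smul_apply, ContinuousLinearMap.comp_apply,
      ContinuousLinearMap.coe_snd', ContinuousLinearMap.coe_fst',
      ContinuousLinearMap.smulRight_apply, smul_eq_mul, neg_mul, neg_smul]
    module
  simpa only [hderiv] using (hθ.prodMk (hf.prodMk hg)).comp hab hφ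

end HasACDerivOn

end AbsolutelyContinuous

section InnerProduct

variable {E : Type*} [NormedAddCommGroup E] [InnerProductSpace ℝ E] {a b : ℝ}

theorem sum_inner_smul_eq_of_orthonormal {ι : Type*} [Fintype ι] [FiniteDimensional ℝ E]
    {e : ι → E} (he : Orthonormal ℝ e)
    (hcard : Fintype.card ι = Module.finrank ℝ E) (x : E) : ∑ i, ⟪e i, x⟫ • e i = x := by
  have hspan := (he.linearIndependent.span_eq_top_of_card_eq_finrank' hcard).ge
  simpa using (OrthonormalBasis.mk he hspan).sum_repr' x

theorem orthonormal_vec_three_iff {u v w : E} :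
    Orthonormal ℝ ![u, v, w] ↔
      ‖u‖ = 1 ∧ ‖v‖ = 1 ∧ ‖w‖ = 1 ∧ ⟪u, v⟫ = 0 ∧ ⟪u, w⟫ = 0 ∧ ⟪v, w⟫ = 0 := by
  simp only [orthonormal_vecCons_iff, Fin.forall_fin_two, Fin.forall_fin_one, cons_val_zero,
    cons_val_one, cons_val_fin_one, IsEmpty.forall_iff, Orthonormal.of_isEmpty, and_true]
  tauto

variable [CompleteSpace E]

namespace HasACDerivOn

variable {f f' g g' : ℝ → E}

protected theorem inner (hab : a ≤ b) (hf : HasACDerivOn f f' a b) (hg : HasACDerivOn g g' a b) :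
    HasACDerivOn (fun t => ⟪f t, g t⟫) (fun t => ⟪f t, g' t⟫ + ⟪f' t, g t⟫) a b := by
  have hderiv (p q : E × E) : fderiv ℝ (fun x : E × E => ⟪x.1, x.2⟫) p q
      = ⟪p.1, q.2⟫ + ⟪q.1, p.2⟫ := by
    rw [fderiv_inner_apply ℝ differentiableAt_fst differentiableAt_snd]
    simp [fderiv_fst, fderiv_snd]
  simpa only [hderiv] using (hf.prodMk hg).comp hab
    (contDiff_inner (𝕜 := ℝ))

theorem ae_inner_add_inner_eq_zero {c : ℝ} (hab : a ≤ b) (hf : HasACDerivOn f f' a b)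
    (hg : HasACDerivOn g g' a b) (hc : ∀ t ∈ Icc a b, ⟪f t, g t⟫ = c) :
    ∀ᵐ t ∂volume.restrict (Ioo a b), ⟪f t, g' t⟫ + ⟪f' t, g t⟫ = 0 :=
  ((hf.inner hab hg).congr hab (fun t ht => (hc t ht).symm) (ae_of_all _ fun _ => rfl)
    ).ae_deriv_unique (const c)

end HasACDerivOn

end InnerProduct

section SpecialOrthogonalGroup

variable {n : Type*} [Fintype n] [DecidableEq n]

theorem adjugate_eq_transpose_of_mem_specialOrthogonalGroup {R : Type*} [CommRing R]
    {A : Matrix n n R} (hA : A ∈ specialOrthogonalGroup n R) : A.adjugate = Aᵀ := by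
  obtain ⟨horth, hdet⟩ := mem_specialOrthogonalGroup_iff.1 hA
  calc A.adjugate = Aᵀ * A * A.adjugate := by rw [(mem_orthogonalGroup_iff' n R).1 horth, one_mul]
    _ = Aᵀ := by rw [mul_assoc, mul_adjugate, hdet, one_smul, mul_one]

-- The entries of the remaining row are cofactors, which depend on the other rows only.
theorem eq_of_mem_specialOrthogonalGroup_of_forall_ne {R : Type*} [CommRing R]
    {A B : Matrix n n R} (hA : A ∈ specialOrthogonalGroup n R)
    (hB : B ∈ specialOrthogonalGroup n R) (k : n) (h : ∀ i ≠ k, A i = B i) : A = B := by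
  have hupdate (v : n → R) : A.updateRow k v = B.updateRow k v := by
    ext i j
    by_cases hi : i = k
    · simp [hi]
    · simp [updateRow_ne hi, h i hi]
  funext i
  by_cases hi : i = k
  · subst hi
    funext j
    rw [← transpose_apply A, ← transpose_apply B,
      ← adjugate_eq_transpose_of_mem_specialOrthogonalGroup hA,
      ← adjugate_eq_transpose_of_mem_specialOrthogonalGroup hB, adjugate_apply, adjugate_apply,
      hupdate]
  · exact h i hi

theorem mem_specialOrthogonalGroup_of_isPreconnected {X : Type*} [TopologicalSpace X] {s : Set X}
    {A : X → Matrix n n ℝ} (hs : IsPreconnected s) (hA : ContinuousOn A s)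
    (horth : ∀ x ∈ s, A x ∈ orthogonalGroup n ℝ) {x₀ x : X} (hx₀ : x₀ ∈ s)
    (hAx₀ : A x₀ ∈ specialOrthogonalGroup n ℝ) (hx : x ∈ s) :
    A x ∈ specialOrthogonalGroup n ℝ := by
  refine mem_specialOrthogonalGroup_iff.2 ⟨horth x hx, ?_⟩
  have hdet : ContinuousOn (fun x => (A x).det) s :=
    continuous_id.matrix_det.comp_continuousOn hA
  refine hs.eq_of_sq_eq hdet continuousOn_const (fun y hy => ?_) (fun _ => one_ne_zero) hx₀
    (mem_specialOrthogonalGroup_iff.1 hAx₀).2 hx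
  have := congrArg det ((mem_orthogonalGroup_iff n ℝ).1 (horth y hy))
  rw [det_mul, det_transpose, det_one] at this
  simpa [sq] using this

end SpecialOrthogonalGroup

section Frame

theorem mem_SO3_iff {M : Matrix (Fin 3) (Fin 3) ℝ} :
    M ∈ SO3 ↔ M ∈ specialOrthogonalGroup (Fin 3) ℝ := by
  rw [mem_specialOrthogonalGroup_iff, mem_orthogonalGroup_iff]
  rfl

theorem orthonormal_row3_iff {M : Matrix (Fin 3) (Fin 3) ℝ} :
    Orthonormal ℝ (row3 M) ↔ M ∈ orthogonalGroup (Fin 3) ℝ := by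
  rw [orthonormal_iff_ite, mem_orthogonalGroup_iff, ← Matrix.ext_iff]
  simp only [mul_apply, transpose_apply, one_apply, PiLp.inner_apply, row3,
    RCLike.inner_apply, conj_trivial, mul_comm, WithLp.equiv_symm_apply]

theorem orthonormal_row3 {M : Matrix (Fin 3) (Fin 3) ℝ} (hM : M ∈ SO3) :
    Orthonormal ℝ (row3 M) :=
  orthonormal_row3_iff.2 (mem_specialOrthogonalGroup_iff.1 (mem_SO3_iff.1 hM)).1

theorem eq_of_row3_zero_of_row3_two {M N : Matrix (Fin 3) (Fin 3) ℝ} (hM : M ∈ SO3)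
    (hN : N ∈ SO3) (h₀ : row3 M 0 = row3 N 0) (h₂ : row3 M 2 = row3 N 2) : M = N := by
  refine eq_of_mem_specialOrthogonalGroup_of_forall_ne (mem_SO3_iff.1 hM) (mem_SO3_iff.1 hN) 1
    fun i hi => ?_
  fin_cases i
  exacts [congrArg WithLp.ofLp h₀, absurd rfl hi, congrArg WithLp.ofLp h₂]

theorem row3_mul (A B : Matrix (Fin 3) (Fin 3) ℝ) (i : Fin 3) :
    row3 (A * B) i = ∑ j, A i j • row3 B j := by
  ext k
  simp [row3, mul_apply]

/-- The matrix whose rows, in the sense of `row3`, are the vectors `e i`. -/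
def ofRows (e : Fin 3 → E3) : Matrix (Fin 3) (Fin 3) ℝ :=
  Matrix.of fun i => (e i).ofLp

theorem row3_ofRows (e : Fin 3 → E3) : row3 (ofRows e) = e :=
  rfl

theorem ofRows_row3 (M : Matrix (Fin 3) (Fin 3) ℝ) :
    ofRows ![row3 M 0, row3 M 1, row3 M 2] = M :=
  funext fun i => by fin_cases i <;> rfl

theorem continuousOn_ofRows {X : Type*} [TopologicalSpace X] {s : Set X} {e : X → Fin 3 → E3}
    (he : ∀ i, ContinuousOn (fun x => e x i) s) : ContinuousOn (fun x => ofRows (e x)) s :=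
  continuousOn_pi.2 fun i => (PiLp.continuous_ofLp 2 _).comp_continuousOn (he i)

/-- The rotation by the angle `θ` in the plane of the first two rows of the frame it multiplies
from the left; it turns the first row towards the second. -/
def frameRotation (θ : ℝ) : Matrix (Fin 3) (Fin 3) ℝ :=
  !![Real.cos θ, Real.sin θ, 0; -Real.sin θ, Real.cos θ, 0; 0, 0, 1]

theorem frameRotation_add (θ φ : ℝ) :
    frameRotation (θ + φ) = frameRotation θ * frameRotation φ := by
  ext i j
  fin_cases i <;> fin_cases j <;>
    simp [frameRotation, mul_apply, Fin.sum_univ_three, Real.cos_add, Real.sin_add] <;> ring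

theorem frameRotation_zero : frameRotation 0 = 1 := by
  ext i j
  fin_cases i <;> fin_cases j <;> simp [frameRotation]

theorem frameRotation_mem_SO3 (θ : ℝ) : frameRotation θ ∈ SO3 := by
  have htranspose : (frameRotation θ)ᵀ = frameRotation (-θ) := by
    ext i j
    fin_cases i <;> fin_cases j <;> simp [frameRotation]
  refine ⟨?_, ?_⟩
  · rw [htranspose, ← frameRotation_add, add_neg_cancel, frameRotation_zero]
  · simp [frameRotation, det_fin_three, ← sq]

theorem frameRotation_mul_mem_SO3 (θ : ℝ) {M : Matrix (Fin 3) (Fin 3) ℝ} (hM : M ∈ SO3) :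
    frameRotation θ * M ∈ SO3 :=
  mem_SO3_iff.2 (mul_mem (mem_SO3_iff.1 (frameRotation_mem_SO3 θ)) (mem_SO3_iff.1 hM))

theorem frameRotation_mul_frameRotation_neg_mul (θ : ℝ) (M : Matrix (Fin 3) (Fin 3) ℝ) :
    frameRotation θ * (frameRotation (-θ) * M) = M := by
  rw [← mul_assoc, ← frameRotation_add, add_neg_cancel, frameRotation_zero, one_mul]

theorem row3_frameRotation_mul_zero (θ : ℝ) (M : Matrix (Fin 3) (Fin 3) ℝ) :
    row3 (frameRotation θ * M) 0 = Real.cos θ • row3 M 0 + Real.sin θ • row3 M 1 := by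
  rw [row3_mul, Fin.sum_univ_three]
  simp [frameRotation]

theorem row3_frameRotation_mul_one (θ : ℝ) (M : Matrix (Fin 3) (Fin 3) ℝ) :
    row3 (frameRotation θ * M) 1 = Real.cos θ • row3 M 1 - Real.sin θ • row3 M 0 := by
  rw [row3_mul, Fin.sum_univ_three]
  simp [frameRotation, neg_add_eq_sub]

theorem row3_frameRotation_mul_two (θ : ℝ) (M : Matrix (Fin 3) (Fin 3) ℝ) :
    row3 (frameRotation θ * M) 2 = row3 M 2 := by
  rw [row3_mul, Fin.sum_univ_three]
  simp [frameRotation]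

end Frame

section ParallelTransport

variable {β β' V W : ℝ → E3} {v w : E3} {a b : ℝ}

theorem isParTrans_iff :
    IsParTrans β β' a b v V ↔
      V a = v ∧ HasACDerivOn V (fun t => -(⟪V t, β' t⟫ • β t)) a b := by
  refine and_congr_right fun hVa => and_congr ?_ (forall₂_congr fun t _ => ?_)
  · exact ⟨fun h => h.neg, fun h => by simpa only [Pi.neg_def, neg_neg] using h.neg⟩
  · rw [intervalIntegral.integral_neg, ← sub_eq_add_neg, hVa]

namespace IsParTrans

theorem inner_eq_zero (hab : a ≤ b) (hβ : HasACDerivOn β β' a b)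
    (hβ_norm : ∀ t ∈ Icc a b, ‖β t‖ = 1) (hV : IsParTrans β β' a b v V) (hv : ⟪v, β a⟫ = 0)
    {t : ℝ} (ht : t ∈ Icc a b) : ⟪V t, β t⟫ = 0 := by
  obtain ⟨hVa, hV⟩ := isParTrans_iff.1 hV
  rw [(hV.inner hab hβ).eq_left_of_ae_eq_zero hab ?_ ht, hVa, hv]
  filter_upwards [ae_restrict_mem measurableSet_Ioo] with s hs
  rw [inner_neg_left, real_inner_smul_left, real_inner_self_eq_norm_sq,
    hβ_norm s (Ioo_subset_Icc_self hs)]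
  ring

theorem inner_eq_inner (hab : a ≤ b) (hβ : HasACDerivOn β β' a b)
    (hβ_norm : ∀ t ∈ Icc a b, ‖β t‖ = 1) (hV : IsParTrans β β' a b v V) (hv : ⟪v, β a⟫ = 0)
    (hW : IsParTrans β β' a b w W) (hw : ⟪w, β a⟫ = 0) {t : ℝ} (ht : t ∈ Icc a b) :
    ⟪V t, W t⟫ = ⟪v, w⟫ := by
  obtain ⟨hVa, hV'⟩ := isParTrans_iff.1 hV
  obtain ⟨hWa, hW'⟩ := isParTrans_iff.1 hW
  rw [(hV'.inner hab hW').eq_left_of_ae_eq_zero hab ?_ ht, hVa, hWa]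
  filter_upwards [ae_restrict_mem measurableSet_Ioo] with s hs
  have hs := Ioo_subset_Icc_self hs
  rw [inner_neg_right, inner_neg_left, real_inner_smul_right, real_inner_smul_left,
    real_inner_comm (W s), hV.inner_eq_zero hab hβ hβ_norm hv hs,
    hW.inner_eq_zero hab hβ hβ_norm hw hs]
  ring

theorem of_ae_deriv_eq_smul {V' : ℝ → E3} {c : ℝ → ℝ} (hab : a ≤ b) (hβ : HasACDerivOn β β' a b)
    (hβ_norm : ∀ t ∈ Icc a b, ‖β t‖ = 1) (hV : HasACDerivOn V V' a b)
    (hVβ : ∀ t ∈ Icc a b, ⟪V t, β t⟫ = 0)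
    (hV' : ∀ᵐ t ∂volume.restrict (Ioo a b), V' t = c t • β t) : IsParTrans β β' a b (V a) V := by
  refine isParTrans_iff.2 ⟨rfl, hV.congr hab (fun _ _ => rfl) ?_⟩
  filter_upwards [hV', hV.ae_inner_add_inner_eq_zero hab hβ hVβ, ae_restrict_mem measurableSet_Ioo]
    with t hV't hinner ht
  rw [hV't, real_inner_smul_left, real_inner_self_eq_norm_sq,
    hβ_norm t (Ioo_subset_Icc_self ht), one_pow, mul_one] at hinner
  rw [hV't, ← neg_smul, ← eq_neg_of_add_eq_zero_right hinner]

theorem orthonormal (hab : a ≤ b) (hβ : HasACDerivOn β β' a b)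
    (hβ_norm : ∀ t ∈ Icc a b, ‖β t‖ = 1) (hV : IsParTrans β β' a b v V)
    (hW : IsParTrans β β' a b w W) (h : Orthonormal ℝ ![v, w, β a]) {t : ℝ} (ht : t ∈ Icc a b) :
    Orthonormal ℝ ![V t, W t, β t] := by
  obtain ⟨hv_norm, hw_norm, -, hvw, hv, hw⟩ := orthonormal_vec_three_iff.1 h
  refine orthonormal_vec_three_iff.2 ⟨?_, ?_, hβ_norm t ht,
    (hV.inner_eq_inner hab hβ hβ_norm hv hW hw ht).trans hvw,
    hV.inner_eq_zero hab hβ hβ_norm hv ht, hW.inner_eq_zero hab hβ hβ_norm hw ht⟩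
  · rw [norm_eq_sqrt_real_inner, hV.inner_eq_inner hab hβ hβ_norm hv hV hv ht,
      ← norm_eq_sqrt_real_inner, hv_norm]
  · rw [norm_eq_sqrt_real_inner, hW.inner_eq_inner hab hβ hβ_norm hw hW hw ht,
      ← norm_eq_sqrt_real_inner, hw_norm]

theorem ofRows_mem_SO3 (hab : a ≤ b) (hβ : HasACDerivOn β β' a b)
    (hβ_norm : ∀ t ∈ Icc a b, ‖β t‖ = 1) (hV : IsParTrans β β' a b v V)
    (hW : IsParTrans β β' a b w W) (h : ofRows ![v, w, β a] ∈ SO3) {t : ℝ} (ht : t ∈ Icc a b) :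
    ofRows ![V t, W t, β t] ∈ SO3 := by
  have horth : Orthonormal ℝ ![v, w, β a] := row3_ofRows ![v, w, β a] ▸ orthonormal_row3 h
  have hcont : ContinuousOn (fun s => ofRows ![V s, W s, β s]) (Icc a b) := by
    refine continuousOn_ofRows fun i => ?_
    fin_cases i
    exacts [(isParTrans_iff.1 hV).2.continuousOn hab, (isParTrans_iff.1 hW).2.continuousOn hab,
      hβ.continuousOn hab]
  refine mem_SO3_iff.2 (mem_specialOrthogonalGroup_of_isPreconnected isPreconnected_Icc hcont
    (fun s hs => ?_) (left_mem_Icc.2 hab) ?_ ht)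
  · rw [← orthonormal_row3_iff, row3_ofRows]
    exact hV.orthonormal hab hβ hβ_norm hW horth hs
  · rw [hV.1, hW.1]
    exact mem_SO3_iff.1 h

end IsParTrans

end ParallelTransport

section ConnectionForm

variable {r P : ℝ → Matrix (Fin 3) (Fin 3) ℝ} {κ κ₀ θ : ℝ → ℝ} {β' : ℝ → E3} {a b : ℝ}

/-- The frame `r` is absolutely continuous on `[a, b]` and `r₁' · r₂ = κ` almost everywhere, i.e.
`κ` is the connection form of the frame `(r₁, r₂)` along the curve `r₃`. The rows are indexed from
`0`, and their derivatives are given by `ρ'`. -/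
def HasConnectionForm (r : ℝ → Matrix (Fin 3) (Fin 3) ℝ) (κ : ℝ → ℝ) (a b : ℝ) : Prop :=
  ∃ ρ' : Fin 3 → ℝ → E3,
    (∀ i, HasACDerivOn (fun t => row3 (r t) i) (ρ' i) a b) ∧
      ∀ᵐ t ∂volume.restrict (Ioo a b), ⟪ρ' 0 t, row3 (r t) 1⟫ = κ t

theorem HasConnectionForm.congr (hr : HasConnectionForm r κ a b) (hab : a ≤ b)
    (hPr : EqOn P r (Icc a b)) : HasConnectionForm P κ a b := by
  obtain ⟨ρ', hρ', hκ⟩ := hr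
  refine ⟨ρ', fun i => (hρ' i).congr hab (fun t ht => ?_) (ae_of_all _ fun _ => rfl), ?_⟩
  · simp only [hPr ht]
  · filter_upwards [hκ, ae_restrict_mem measurableSet_Ioo] with t hκt ht
    rw [hPr (Ioo_subset_Icc_self ht), hκt]

theorem ae_inner_deriv_row3_antisymm {ρ' : Fin 3 → ℝ → E3} (hab : a ≤ b)
    (hr : ∀ t ∈ Icc a b, r t ∈ SO3) (hρ' : ∀ i, HasACDerivOn (fun t => row3 (r t) i) (ρ' i) a b) :
    ∀ᵐ t ∂volume.restrict (Ioo a b), ∀ i j,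
      ⟪ρ' i t, row3 (r t) j⟫ = -⟪ρ' j t, row3 (r t) i⟫ := by
  refine ae_all_iff.2 fun i => ae_all_iff.2 fun j => ?_
  have hconst (t : ℝ) (ht : t ∈ Icc a b) :
      ⟪row3 (r t) i, row3 (r t) j⟫ = if i = j then 1 else 0 :=
    orthonormal_iff_ite.1 (orthonormal_row3 (hr t ht)) i j
  filter_upwards [(hρ' i).ae_inner_add_inner_eq_zero hab (hρ' j) hconst] with t ht
  rw [real_inner_comm (ρ' j t)] at ht
  exact eq_neg_of_add_eq_zero_right ht

theorem hasConnectionForm_iff_exists_frame_equations (hab : a ≤ b)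
    (hr : ∀ t ∈ Icc a b, r t ∈ SO3) :
    HasConnectionForm r κ a b ↔
      ∃ (ρ' : Fin 3 → ℝ → E3) (τ μ : ℝ → ℝ),
        (∀ i, HasACDerivOn (fun t => row3 (r t) i) (ρ' i) a b) ∧
        IntegrableOn τ (Ioo a b) ∧ IntegrableOn μ (Ioo a b) ∧
        ∀ᵐ t ∂volume.restrict (Ioo a b),
          ρ' 0 t = κ t • row3 (r t) 1 + μ t • row3 (r t) 2 ∧
          ρ' 1 t = -κ t • row3 (r t) 0 + τ t • row3 (r t) 2 ∧
          ρ' 2 t = -μ t • row3 (r t) 0 - τ t • row3 (r t) 1 := by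
  constructor
  · rintro ⟨ρ', hρ', hκ⟩
    have hint (i : Fin 3) : IntegrableOn (fun t => ⟪row3 (r t) 2, ρ' i t⟫) (Ioo a b) := by
      rw [← intervalIntegrable_iff_integrableOn_Ioo_of_le hab]
      refine intervalIntegrable_continuousOn_clm_apply (A := fun t => innerSL ℝ (row3 (r t) 2))
        ((innerSL ℝ).continuous.comp_continuousOn ?_) (hρ' i).1
      exact uIcc_of_le hab ▸ (hρ' 2).continuousOn hab
    refine ⟨ρ', _, _, hρ', hint 1, hint 0, ?_⟩
    filter_upwards [hκ, ae_inner_deriv_row3_antisymm hab hr hρ',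
      ae_restrict_mem measurableSet_Ioo] with t hκt hanti ht
    have hexpand (x : E3) := sum_inner_smul_eq_of_orthonormal
      (orthonormal_row3 (hr t (Ioo_subset_Icc_self ht))) (by simp) x
    have hself (i : Fin 3) : ⟪ρ' i t, row3 (r t) i⟫ = 0 := self_eq_neg.1 (hanti i i)
    refine ⟨?_, ?_, ?_⟩
    all_goals
      refine (hexpand _).symm.trans ?_
      simp only [Fin.sum_univ_three, real_inner_comm (ρ' _ t), hself, hκt, hanti 1 0, hanti 2 0,
        hanti 2 1]
      module
  · rintro ⟨ρ', τ, μ, hρ', -, -, hderiv⟩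
    refine ⟨ρ', hρ', ?_⟩
    filter_upwards [hderiv, ae_restrict_mem measurableSet_Ioo] with t hderiv_t ht
    have horth := orthonormal_row3 (hr t (Ioo_subset_Icc_self ht))
    have h21 : ⟪row3 (r t) 2, row3 (r t) 1⟫ = 0 := horth.2 (by decide)
    rw [hderiv_t.1, inner_add_left, real_inner_smul_left, real_inner_smul_left,
      real_inner_self_eq_norm_sq, horth.1 1, h21]
    ring

theorem HasConnectionForm.frameRotation_mul (hP : HasConnectionForm P κ₀ a b) (hab : a ≤ b)
    (hP_mem : ∀ t ∈ Icc a b, P t ∈ SO3) (hθ : HasACDerivOn θ κ a b) :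
    HasConnectionForm (fun t => frameRotation (θ t) * P t) (fun t => κ₀ t + κ t) a b := by
  obtain ⟨ρ', hρ', hκ₀⟩ := hP
  have hrow_zero := hθ.cos_smul_add_sin_smul hab (hρ' 0) (hρ' 1)
  have hrow_one := hθ.cos_smul_add_sin_smul hab (hρ' 1) (hρ' 0).neg
  simp only [← row3_frameRotation_mul_zero, ← row3_frameRotation_mul_one] at hrow_zero
  simp only [smul_neg, ← sub_eq_add_neg, ← row3_frameRotation_mul_one] at hrow_one
  have hrow_two : HasACDerivOn (fun t => row3 (frameRotation (θ t) * P t) 2) (ρ' 2) a b := by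
    simpa only [row3_frameRotation_mul_two] using hρ' 2
  refine ⟨![_, _, ρ' 2], Fin.forall_fin_succ.2 ⟨hrow_zero, Fin.forall_fin_two.2
    ⟨hrow_one, hrow_two⟩⟩, ?_⟩
  filter_upwards [hκ₀, ae_inner_deriv_row3_antisymm hab hP_mem hρ',
    ae_restrict_mem measurableSet_Ioo] with t hκ₀t hanti ht
  have hself (i : Fin 3) : ⟪ρ' i t, row3 (P t) i⟫ = 0 := self_eq_neg.1 (hanti i i)
  have hnorm : ‖row3 (frameRotation (θ t) * P t) 1‖ = 1 :=
    (orthonormal_row3 (frameRotation_mul_mem_SO3 _ (hP_mem t (Ioo_subset_Icc_self ht)))).1 1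
  calc ⟪κ t • row3 (frameRotation (θ t) * P t) 1
        + (Real.cos (θ t) • ρ' 0 t + Real.sin (θ t) • ρ' 1 t), row3 (frameRotation (θ t) * P t) 1⟫
      = κ t + ⟪Real.cos (θ t) • ρ' 0 t + Real.sin (θ t) • ρ' 1 t,
          Real.cos (θ t) • row3 (P t) 1 - Real.sin (θ t) • row3 (P t) 0⟫ := by
        rw [inner_add_left, real_inner_smul_left, real_inner_self_eq_norm_sq, hnorm, one_pow,
          mul_one, row3_frameRotation_mul_one]
    _ = κ t + (Real.cos (θ t) ^ 2 + Real.sin (θ t) ^ 2) * κ₀ t := by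
        simp only [inner_add_left, inner_sub_right, real_inner_smul_left, real_inner_smul_right,
          hself, hanti 1 0, hκ₀t]
        ring
    _ = κ₀ t + κ t := by rw [Real.cos_sq_add_sin_sq, one_mul, add_comm]

theorem hasConnectionForm_zero_iff (hab : a ≤ b) (hP : ∀ t ∈ Icc a b, P t ∈ SO3)
    (hβ : HasACDerivOn (fun t => row3 (P t) 2) β' a b) :
    HasConnectionForm P (fun _ => 0) a b ↔
      IsParTrans (fun t => row3 (P t) 2) β' a b (row3 (P a) 0) (fun t => row3 (P t) 0) ∧
      IsParTrans (fun t => row3 (P t) 2) β' a b (row3 (P a) 1) (fun t => row3 (P t) 1) := by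
  have horth (t : ℝ) (ht : t ∈ Icc a b) := orthonormal_row3 (hP t ht)
  constructor
  · intro h
    obtain ⟨ρ', τ, μ, hρ', -, -, hderiv⟩ :=
      (hasConnectionForm_iff_exists_frame_equations hab hP).1 h
    refine ⟨.of_ae_deriv_eq_smul (c := μ) hab hβ (fun t ht => (horth t ht).1 2) (hρ' 0)
      (fun t ht => (horth t ht).2 (by decide)) ?_, .of_ae_deriv_eq_smul (c := τ) hab hβ
      (fun t ht => (horth t ht).1 2) (hρ' 1) (fun t ht => (horth t ht).2 (by decide)) ?_⟩
    · filter_upwards [hderiv] with t ht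
      simpa only [zero_smul, zero_add] using ht.1
    · filter_upwards [hderiv] with t ht
      simpa only [neg_zero, zero_smul, zero_add] using ht.2.1
  · rintro ⟨h₀, h₁⟩
    refine ⟨![_, _, β'], Fin.forall_fin_succ.2 ⟨(isParTrans_iff.1 h₀).2,
      Fin.forall_fin_two.2 ⟨(isParTrans_iff.1 h₁).2, hβ⟩⟩, ?_⟩
    filter_upwards [ae_restrict_mem measurableSet_Ioo] with t ht
    have h21 : ⟪row3 (P t) 2, row3 (P t) 1⟫ = 0 := (horth t (Ioo_subset_Icc_self ht)).2 (by decide)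
    simp only [cons_val_zero, inner_neg_left, real_inner_smul_left, h21, mul_zero, neg_zero]

theorem exists_isParTrans_iff_hasConnectionForm (hab : a ≤ b) (hr : ∀ t ∈ Icc a b, r t ∈ SO3)
    (hβ : HasACDerivOn (fun t => row3 (r t) 2) β' a b) (hθ : HasACDerivOn θ κ a b)
    (hθa : θ a = 0) :
    (∃ V W : ℝ → E3,
      IsParTrans (fun t => row3 (r t) 2) β' a b (row3 (r a) 0) V ∧
      IsParTrans (fun t => row3 (r t) 2) β' a b (row3 (r a) 1) W ∧
      ∀ t ∈ Icc a b, row3 (r t) 0 = Real.cos (θ t) • V t + Real.sin (θ t) • W t) ↔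
    HasConnectionForm r κ a b := by
  constructor
  · rintro ⟨V, W, hV, hW, hrow⟩
    let P (t : ℝ) : Matrix (Fin 3) (Fin 3) ℝ := ofRows ![V t, W t, row3 (r t) 2]
    have hP (t : ℝ) (ht : t ∈ Icc a b) : P t ∈ SO3 :=
      hV.ofRows_mem_SO3 hab hβ (fun s hs => (orthonormal_row3 (hr s hs)).1 2) hW
        (ofRows_row3 (r a) ▸ hr a (left_mem_Icc.2 hab)) ht
    have hrP : EqOn r (fun t => frameRotation (θ t) * P t) (Icc a b) := fun t ht => by
      refine eq_of_row3_zero_of_row3_two (hr t ht) (frameRotation_mul_mem_SO3 _ (hP t ht)) ?_ ?_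
      · exact (hrow t ht).trans (row3_frameRotation_mul_zero (θ t) (P t)).symm
      · exact (row3_frameRotation_mul_two (θ t) (P t)).symm
    have hP_form : HasConnectionForm P (fun _ => 0) a b := by
      refine (hasConnectionForm_zero_iff hab hP hβ).2 ?_
      simp only [P, row3_ofRows, cons_val_zero, cons_val_one, cons_val_two, head_cons, tail_cons,
        hV.1, hW.1]
      exact ⟨hV, hW⟩
    simpa only [zero_add] using (hP_form.frameRotation_mul hab hP hθ).congr hab hrP
  · intro h
    let P (t : ℝ) : Matrix (Fin 3) (Fin 3) ℝ := frameRotation (-θ t) * r t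
    have hP (t : ℝ) (ht : t ∈ Icc a b) : P t ∈ SO3 := frameRotation_mul_mem_SO3 _ (hr t ht)
    have hPa : P a = r a := by
      simp only [P, hθa, neg_zero, frameRotation_zero, one_mul]
    have hrow_two (t : ℝ) : row3 (P t) 2 = row3 (r t) 2 := row3_frameRotation_mul_two _ _
    have hP_form : HasConnectionForm P (fun _ => 0) a b := by
      simpa only [add_neg_cancel] using h.frameRotation_mul hab hr hθ.neg
    obtain ⟨hV, hW⟩ := (hasConnectionForm_zero_iff (β' := β') hab hP
      (by simpa only [hrow_two] using hβ)).1 hP_form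
    simp only [hrow_two, hPa] at hV hW
    refine ⟨_, _, hV, hW, fun t _ => ?_⟩
    rw [← row3_frameRotation_mul_zero, frameRotation_mul_frameRotation_neg_mul]

end ConnectionForm

/-- For `κ ∈ L¹(I)` and `r ∈ L^∞(I, SO(3))` with `r₃ ∈ W^{1,1}`, the following
are equivalent: (i) `r₁(t) = cos(∫₀ᵗκ) Π_{r₃|_(0,t)} r₁(0) + sin(∫₀ᵗκ) Π_{r₃|_(0,t)} r₂(0)` for
all `t ∈ I`; (ii) `r ∈ W^{1,1}(I, SO(3))` and `r₁'·r₂ = κ` a.e.; (iii) `r ∈ W^{1,1}(I, SO(3))`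
and there are `τ, μ ∈ L¹(I)` with `r₁' = κ r₂ + μ r₃`, `r₂' = -κ r₁ + τ r₃`,
`r₃' = -μ r₁ - τ r₂` a.e. -/
theorem statement4
    (κ : ℝ → ℝ) (hκ : IntegrableOn κ (Set.Ioo 0 1))
    (r : ℝ → Matrix (Fin 3) (Fin 3) ℝ)
    (hSO : ∀ t ∈ Set.Icc (0:ℝ) 1, r t ∈ SO3)
    (b' : ℝ → E3) (hb : FTCOn (fun t => row3 (r t) 2) b' 0 1) :
    -- (i)
    ((∃ V₁ V₂ : ℝ → E3,
        IsParTrans (fun t => row3 (r t) 2) b' 0 1 (row3 (r 0) 0) V₁ ∧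
        IsParTrans (fun t => row3 (r t) 2) b' 0 1 (row3 (r 0) 1) V₂ ∧
        ∀ t ∈ Set.Icc (0:ℝ) 1,
          row3 (r t) 0 = Real.cos (∫ s in (0:ℝ)..t, κ s) • V₁ t
            + Real.sin (∫ s in (0:ℝ)..t, κ s) • V₂ t)
      ↔
    -- (ii)
      (∃ ρ' : Fin 3 → ℝ → E3,
        (∀ i : Fin 3, FTCOn (fun t => row3 (r t) i) (ρ' i) 0 1) ∧
        ∀ᵐ t ∂muI, ⟪ρ' 0 t, row3 (r t) 1⟫ = κ t)) ∧
    -- (ii) ↔ (iii)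
    ((∃ ρ' : Fin 3 → ℝ → E3,
        (∀ i : Fin 3, FTCOn (fun t => row3 (r t) i) (ρ' i) 0 1) ∧
        ∀ᵐ t ∂muI, ⟪ρ' 0 t, row3 (r t) 1⟫ = κ t)
      ↔
      (∃ (ρ' : Fin 3 → ℝ → E3) (τ μ : ℝ → ℝ),
        (∀ i : Fin 3, FTCOn (fun t => row3 (r t) i) (ρ' i) 0 1) ∧
        IntegrableOn τ (Set.Ioo 0 1) ∧ IntegrableOn μ (Set.Ioo 0 1) ∧
        (∀ᵐ t ∂muI,
          ρ' 0 t = κ t • row3 (r t) 1 + μ t • row3 (r t) 2 ∧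
          ρ' 1 t = -κ t • row3 (r t) 0 + τ t • row3 (r t) 2 ∧
          ρ' 2 t = -μ t • row3 (r t) 0 - τ t • row3 (r t) 1))) := by
  simp only [ftcOn_iff_hasACDerivOn, muI] at hb ⊢
  have hθ : HasACDerivOn (fun t => ∫ s in (0 : ℝ)..t, κ s) κ 0 1 :=
    .integral ((intervalIntegrable_iff_integrableOn_Ioo_of_le zero_le_one).2 hκ)
  exact ⟨exists_isParTrans_iff_hasConnectionForm zero_le_one hSO hb hθ
      intervalIntegral.integral_same,
    hasConnectionForm_iff_exists_frame_equations zero_le_one hSO⟩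
end
end

section
/- Let β ∈ C^∞([0,1], S²) be an immersed curve (β'(t) ≠ 0 for all t), let θ ∈ ℝ, and let V ⊂ S² be an open neighbourhood of β([0,1]). Then there exists an immersed curve β̃ ∈ C^∞([0,1], V) which agrees with β in a neighbourhood of {0,1} and which satisfies Π_{β̃} v = R_{β(1)}^{(θ)}(Π_β v) for every v ∈ ℝ³ with v · β(0) = 0. -/
open MeasureTheory Set Filter Matrix
open scoped RealInnerProductSpace Topology ENNReal NNReal

noncomputable section

/-!
Push `β` off along its unit normals `N = β × T`, where `T` is the unit tangent: a planar curve
`(u, b)` in a thin strip around `[0, 1] × {0}` gives the spherical curve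
`cos b • β(u) + sin b • N(u)`. It is immersed as soon as `(u, b)` is, and `T ∘ u` is a unit tangent
field along it, turning relative to parallel transport at the rate `u' (k(u) cos b + m(u) sin b)`,
where `k` is the corresponding rate for `T` along `β` and `m` is the speed of `β`. If `(u, b)` is
the segment near both ends, the parallel transports of the two curves therefore differ by a rotation
whose angle is the difference of the integrals of these rates.

For a curve `(u, b)` which performs `N` loops, this angle is at least a positive multiple of `N`
minus a constant, since all loops turn in the same direction and `m > 0`. Taking `N` so large that
the angle exceeds `2π` and then shrinking the height `b` to zero, the angle moves continuously to
`0`, and on the way represents every `θ` modulo `2π`.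
-/

/-! ### Cross products and rotations of tangent planes -/

lemma inner_eq_dotProduct (v w : E3) : ⟪v, w⟫ = v.ofLp ⬝ᵥ w.ofLp := by
  rw [EuclideanSpace.inner_eq_star_dotProduct, star_trivial, dotProduct_comm]

/-- The cross product of `ℝ³` as a continuous bilinear map, through which `cross3` inherits
linearity and smoothness. -/
def cross3L : E3 →L[ℝ] E3 →L[ℝ] E3 :=
  let e := WithLp.linearEquiv 2 ℝ (Fin 3 → ℝ)
  LinearMap.toContinuousBilinearMap
    ((crossProduct.compl₁₂ e.toLinearMap e.toLinearMap).compr₂ e.symm.toLinearMap)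

lemma cross3_eq_cross3L (v w : E3) : cross3 v w = cross3L v w := by
  simp [cross3, cross3L, cross_apply, LinearMap.toContinuousBilinearMap]

lemma ofLp_cross3 (v w : E3) : (cross3 v w).ofLp = v.ofLp ⨯₃ w.ofLp := by
  simp [cross3, cross_apply]

lemma inner_self_cross3 (v w : E3) : ⟪v, cross3 v w⟫ = 0 := by
  rw [inner_eq_dotProduct, ofLp_cross3, dot_self_cross]

lemma inner_cross3_self (v w : E3) : ⟪w, cross3 v w⟫ = 0 := by
  rw [inner_eq_dotProduct, ofLp_cross3, dot_cross_self]

lemma inner_cross3_cross3 (u v w x : E3) :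
    ⟪cross3 u v, cross3 w x⟫ = ⟪u, w⟫ * ⟪v, x⟫ - ⟪u, x⟫ * ⟪v, w⟫ := by
  simp only [inner_eq_dotProduct, ofLp_cross3, cross_dot_cross]

lemma cross3_cross3 (u v w : E3) : cross3 u (cross3 v w) = ⟪u, w⟫ • v - ⟪v, u⟫ • w := by
  apply WithLp.ofLp_injective 2
  simp only [ofLp_cross3, inner_eq_dotProduct, cross_cross_eq_smul_sub_smul', WithLp.ofLp_sub,
    WithLp.ofLp_smul]

lemma neg_cross3 (v w : E3) : -cross3 v w = cross3 w v := by
  apply WithLp.ofLp_injective 2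
  rw [WithLp.ofLp_neg, ofLp_cross3, ofLp_cross3, cross_anticomm]

lemma cross3_add_right (u v w : E3) : cross3 u (v + w) = cross3 u v + cross3 u w := by
  simp only [cross3_eq_cross3L, map_add]

lemma cross3_smul_right (c : ℝ) (v w : E3) : cross3 v (c • w) = c • cross3 v w := by
  simp only [cross3_eq_cross3L, map_smul]

lemma contDiffAt_cross3 {f g : ℝ → E3} {t : ℝ} {n : WithTop ℕ∞} (hf : ContDiffAt ℝ n f t)
    (hg : ContDiffAt ℝ n g t) : ContDiffAt ℝ n (fun s ↦ cross3 (f s) (g s)) t := by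
  simp only [cross3_eq_cross3L]
  exact (cross3L.contDiff.contDiffAt.comp t hf).clm_apply hg

section UnitFrame

variable {z e : E3}

lemma norm_cross3_of_inner_eq_zero (hz : ‖z‖ = 1) (he : ‖e‖ = 1) (hez : ⟪e, z⟫ = 0) :
    ‖cross3 z e‖ = 1 := by
  have h : ⟪cross3 z e, cross3 z e⟫ = 1 := by
    rw [inner_cross3_cross3, real_inner_self_eq_norm_sq, real_inner_self_eq_norm_sq, hz, he, hez]
    norm_num
  rw [real_inner_self_eq_norm_sq] at h
  exact (pow_eq_one_iff_of_nonneg (norm_nonneg _) two_ne_zero).1 h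

lemma cross3_cross3_self (hz : ‖z‖ = 1) (hez : ⟪e, z⟫ = 0) :
    cross3 z (cross3 z e) = -e := by
  rw [cross3_cross3, real_inner_self_eq_norm_sq, real_inner_comm, hez, hz]
  module

lemma cross3_self_cross3 (he : ‖e‖ = 1) (hez : ⟪e, z⟫ = 0) :
    cross3 e (cross3 z e) = z := by
  rw [cross3_cross3, real_inner_self_eq_norm_sq, real_inner_comm, hez, he]
  module

lemma eq_inner_smul_add_inner_smul_add_inner_smul (hz : ‖z‖ = 1) (he : ‖e‖ = 1)
    (hez : ⟪e, z⟫ = 0) (v : E3) :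
    v = ⟪v, e⟫ • e + ⟪v, cross3 z e⟫ • cross3 z e + ⟪v, z⟫ • z := by
  -- Expand `f × (v × f) = v - ⟪v, f⟫ f`, where `f = z × e`, by the triple product formula.
  have hfz : cross3 (cross3 z e) z = e := by
    rw [← neg_cross3, cross3_cross3_self hz hez, neg_neg]
  have hfe : cross3 (cross3 z e) e = -z := by rw [← neg_cross3, cross3_self_cross3 he hez]
  have h : cross3 (cross3 z e) (cross3 v (cross3 z e)) = ⟪v, e⟫ • e + ⟪v, z⟫ • z := by
    rw [cross3_cross3 v, sub_eq_add_neg, ← neg_smul, cross3_add_right, cross3_smul_right,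
      cross3_smul_right, hfz, hfe, real_inner_comm v z]
    module
  rw [cross3_cross3, real_inner_self_eq_norm_sq, norm_cross3_of_inner_eq_zero hz he hez] at h
  linear_combination (norm := module) h

end UnitFrame

/-- The rotation `R_z^{(φ)}` of the tangent plane of the sphere at `z`. -/
def tangentRotation (z : E3) (φ : ℝ) (v : E3) : E3 :=
  Real.cos φ • v + Real.sin φ • cross3 z v

lemma tangentRotation_tangentRotation {z v : E3} (hz : ‖z‖ = 1) (hv : ⟪v, z⟫ = 0) (φ ψ : ℝ) :
    tangentRotation z φ (tangentRotation z ψ v) = tangentRotation z (φ + ψ) v := by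
  simp only [tangentRotation, cross3_add_right, cross3_smul_right, cross3_cross3_self hz hv,
    Real.cos_add, Real.sin_add]
  module

lemma tangentRotation_add_int_mul_two_pi (z v : E3) (φ : ℝ) (n : ℤ) :
    tangentRotation z (φ + n * (2 * Real.pi)) v = tangentRotation z φ v := by
  simp only [tangentRotation, Real.cos_add_int_mul_two_pi, Real.sin_add_int_mul_two_pi]

/-! ### Moving frames along spherical curves -/

lemma inner_deriv_left_eq_neg_inner_deriv_right {F : Type*} [NormedAddCommGroup F]
    [InnerProductSpace ℝ F] {f g : ℝ → F} {s : Set ℝ} {t c : ℝ} (hs : UniqueDiffWithinAt ℝ s t)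
    (ht : t ∈ s) (hf : DifferentiableAt ℝ f t) (hg : DifferentiableAt ℝ g t)
    (hc : ∀ x ∈ s, ⟪f x, g x⟫ = c) : ⟪deriv f t, g t⟫ = -⟪f t, deriv g t⟫ := by
  have hderiv := (hf.hasDerivAt.inner ℝ hg.hasDerivAt).hasDerivWithinAt (s := s)
  have hzero : HasDerivWithinAt (fun x ↦ ⟪f x, g x⟫) 0 s t :=
    (hasDerivWithinAt_const t s c).congr hc (hc t ht)
  linarith [hs.eq_deriv s hderiv hzero]

lemma eq_left_of_hasDerivWithinAt_zero {F : Type*} [NormedAddCommGroup F] [NormedSpace ℝ F]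
    {f : ℝ → F} {a b : ℝ} (hf : ∀ t ∈ Icc a b, HasDerivWithinAt f 0 (Icc a b) t) :
    ∀ t ∈ Icc a b, f t = f a :=
  constant_of_derivWithin_zero (fun t ht ↦ (hf t ht).differentiableWithinAt) fun t ht ↦
    (hf t (Ico_subset_Icc_self ht)).derivWithin
      (uniqueDiffOn_Icc (ht.1.trans_lt ht.2) t (Ico_subset_Icc_self ht))

lemma hasDerivWithinAt_integral_Icc {F : Type*} [NormedAddCommGroup F] [NormedSpace ℝ F]
    [CompleteSpace F] {g : ℝ → F} {a b t : ℝ} (hg : ContinuousOn g (Icc a b))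
    (ht : t ∈ Icc a b) : HasDerivWithinAt (fun x ↦ ∫ s in a..x, g s) (g t) (Icc a b) t := by
  have : Fact (t ∈ Icc a b) := ⟨ht⟩
  have hint : IntervalIntegrable g volume a t :=
    (hg.mono (Icc_subset_Icc_right ht.2)).intervalIntegrable_of_Icc ht.1
  exact intervalIntegral.integral_hasDerivWithinAt_right hint
    (hg.stronglyMeasurableAtFilter_nhdsWithin measurableSet_Icc t) (hg t ht)

lemma eq_cos_add_sin_of_hasDerivWithinAt {x y Θ ω : ℝ → ℝ} {a b : ℝ}
    (hx : ∀ t ∈ Icc a b, HasDerivWithinAt x (ω t * y t) (Icc a b) t)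
    (hy : ∀ t ∈ Icc a b, HasDerivWithinAt y (-(ω t * x t)) (Icc a b) t)
    (hΘ : ∀ t ∈ Icc a b, HasDerivWithinAt Θ (ω t) (Icc a b) t) (hΘa : Θ a = 0) :
    ∀ t ∈ Icc a b, x t = Real.cos (Θ t) * x a + Real.sin (Θ t) * y a ∧
      y t = Real.cos (Θ t) * y a - Real.sin (Θ t) * x a := by
  intro t ht
  have hp : Real.cos (Θ t) * x t - Real.sin (Θ t) * y t = x a := by
    simpa [hΘa] using eq_left_of_hasDerivWithinAt_zero
      (f := fun t ↦ Real.cos (Θ t) * x t - Real.sin (Θ t) * y t)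
      (fun s hs ↦ (((hΘ s hs).cos.mul (hx s hs)).sub ((hΘ s hs).sin.mul (hy s hs))).congr_deriv
        (by ring)) t ht
  have hq : Real.sin (Θ t) * x t + Real.cos (Θ t) * y t = y a := by
    simpa [hΘa] using eq_left_of_hasDerivWithinAt_zero
      (f := fun t ↦ Real.sin (Θ t) * x t + Real.cos (Θ t) * y t)
      (fun s hs ↦ (((hΘ s hs).sin.mul (hx s hs)).add ((hΘ s hs).cos.mul (hy s hs))).congr_deriv
        (by ring)) t ht
  have hcs := Real.sin_sq_add_cos_sq (Θ t)
  rw [← hp, ← hq]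
  exact ⟨by linear_combination (-x t) * hcs, by linear_combination (-y t) * hcs⟩

/-- The companion `γ × E` completing a unit field `E` tangent to the sphere along `γ` to a
positively oriented orthonormal frame of the tangent planes. -/
def conormal (γ E : ℝ → E3) (t : ℝ) : E3 := cross3 (γ t) (E t)

lemma inner_curve_conormal (γ E : ℝ → E3) (t : ℝ) : ⟪γ t, conormal γ E t⟫ = 0 :=
  inner_self_cross3 _ _

lemma inner_conormal_curve (γ E : ℝ → E3) (t : ℝ) : ⟪conormal γ E t, γ t⟫ = 0 := by
  rw [real_inner_comm, inner_curve_conormal]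

lemma inner_field_conormal (γ E : ℝ → E3) (t : ℝ) : ⟪E t, conormal γ E t⟫ = 0 :=
  inner_cross3_self _ _

/-- The rate `⟪E', γ × E⟫` at which the tangent field `E` turns with respect to parallel transport
along `γ`. For the unit tangent of `γ` this is speed times geodesic curvature. -/
def turningRate (γ E : ℝ → E3) (t : ℝ) : ℝ := ⟪deriv E t, conormal γ E t⟫

/-- The vector at `γ b` with the same coordinates in the frame `(E, γ × E)` as the tangential part
of the vector `v` at `γ a`. -/
def frameTransport (γ E : ℝ → E3) (a b : ℝ) (v : E3) : E3 :=
  ⟪v, E a⟫ • E b + ⟪v, conormal γ E a⟫ • conormal γ E b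

/-- `E` is a unit vector field tangent to the sphere along the spherical curve `γ` over `[a, b]`.
Both are differentiable in a neighbourhood of each point of `[a, b]`, but the metric conditions are
imposed on `[a, b]` only. -/
structure IsUnitTangentField (γ E : ℝ → E3) (a b : ℝ) : Prop where
  contDiffAt_curve : ∀ t ∈ Icc a b, ContDiffAt ℝ 1 γ t
  contDiffAt_field : ∀ t ∈ Icc a b, ContDiffAt ℝ 1 E t
  norm_curve : ∀ t ∈ Icc a b, ‖γ t‖ = 1
  norm_field : ∀ t ∈ Icc a b, ‖E t‖ = 1
  inner_field_curve : ∀ t ∈ Icc a b, ⟪E t, γ t⟫ = 0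

namespace IsUnitTangentField

variable {γ E : ℝ → E3} {a b t : ℝ}

lemma contDiffAt_conormal (h : IsUnitTangentField γ E a b) (ht : t ∈ Icc a b) :
    ContDiffAt ℝ 1 (conormal γ E) t :=
  contDiffAt_cross3 (h.contDiffAt_curve t ht) (h.contDiffAt_field t ht)

lemma norm_conormal (h : IsUnitTangentField γ E a b) (ht : t ∈ Icc a b) :
    ‖conormal γ E t‖ = 1 :=
  norm_cross3_of_inner_eq_zero (h.norm_curve t ht) (h.norm_field t ht) (h.inner_field_curve t ht)

lemma cross3_conormal (h : IsUnitTangentField γ E a b) (ht : t ∈ Icc a b) :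
    cross3 (γ t) (conormal γ E t) = -E t :=
  cross3_cross3_self (h.norm_curve t ht) (h.inner_field_curve t ht)

lemma eq_frame (h : IsUnitTangentField γ E a b) (ht : t ∈ Icc a b) (v : E3) :
    v = ⟪v, E t⟫ • E t + ⟪v, conormal γ E t⟫ • conormal γ E t + ⟪v, γ t⟫ • γ t :=
  eq_inner_smul_add_inner_smul_add_inner_smul (h.norm_curve t ht) (h.norm_field t ht)
    (h.inner_field_curve t ht) v

lemma continuousAt_turningRate (h : IsUnitTangentField γ E a b) (ht : t ∈ Icc a b) :
    ContinuousAt (turningRate γ E) t :=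
  ((h.contDiffAt_field t ht).derivWithin (m := 0) (by simp)).continuousAt.inner
    (h.contDiffAt_conormal ht).continuousAt

lemma differentiableAt_curve (h : IsUnitTangentField γ E a b) (ht : t ∈ Icc a b) :
    DifferentiableAt ℝ γ t := (h.contDiffAt_curve t ht).differentiableAt one_ne_zero

lemma differentiableAt_field (h : IsUnitTangentField γ E a b) (ht : t ∈ Icc a b) :
    DifferentiableAt ℝ E t := (h.contDiffAt_field t ht).differentiableAt one_ne_zero

lemma differentiableAt_conormal (h : IsUnitTangentField γ E a b) (ht : t ∈ Icc a b) :
    DifferentiableAt ℝ (conormal γ E) t := (h.contDiffAt_conormal ht).differentiableAt one_ne_zero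

theorem deriv_field (h : IsUnitTangentField γ E a b) (hab : a < b) (ht : t ∈ Icc a b) :
    deriv E t = turningRate γ E t • conormal γ E t - ⟪E t, deriv γ t⟫ • γ t := by
  have hs := uniqueDiffOn_Icc hab t ht
  have hE := h.differentiableAt_field ht
  have hEE : ⟪deriv E t, E t⟫ = 0 := by
    have := inner_deriv_left_eq_neg_inner_deriv_right hs ht hE hE (c := 1) fun s hs ↦ by
      rw [real_inner_self_eq_norm_sq, h.norm_field s hs, one_pow]
    rw [real_inner_comm] at this ⊢
    linarith
  have hEγ := inner_deriv_left_eq_neg_inner_deriv_right hs ht hE (h.differentiableAt_curve ht)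
    h.inner_field_curve
  rw [h.eq_frame ht (deriv E t), hEE, hEγ]
  simp only [turningRate]
  module

theorem deriv_conormal (h : IsUnitTangentField γ E a b) (hab : a < b) (ht : t ∈ Icc a b) :
    deriv (conormal γ E) t =
      -turningRate γ E t • E t - ⟪conormal γ E t, deriv γ t⟫ • γ t := by
  have hs := uniqueDiffOn_Icc hab t ht
  have hN := h.differentiableAt_conormal ht
  have hNE : ⟪deriv (conormal γ E) t, E t⟫ = -turningRate γ E t := by
    rw [turningRate, real_inner_comm (conormal γ E t)]
    exact inner_deriv_left_eq_neg_inner_deriv_right hs ht hN (h.differentiableAt_field ht)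
      fun s _ ↦ by rw [real_inner_comm, inner_field_conormal]
  have hNN : ⟪deriv (conormal γ E) t, conormal γ E t⟫ = 0 := by
    have := inner_deriv_left_eq_neg_inner_deriv_right hs ht hN hN (c := 1) fun s hs ↦ by
      rw [real_inner_self_eq_norm_sq, h.norm_conormal hs, one_pow]
    rw [real_inner_comm] at this ⊢
    linarith
  have hNγ := inner_deriv_left_eq_neg_inner_deriv_right hs ht hN (h.differentiableAt_curve ht)
    fun s _ ↦ inner_conormal_curve γ E s
  rw [h.eq_frame ht (deriv (conormal γ E) t), hNE, hNN, hNγ]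
  module

end IsUnitTangentField

namespace IsParTrans

variable {γ γ' E V : ℝ → E3} {a b : ℝ} {v : E3}

theorem hasDerivWithinAt (hV : IsParTrans γ γ' a b v V) (hγ : ContinuousOn γ (Icc a b))
    (hγ' : ContinuousOn γ' (Icc a b)) :
    ∀ t ∈ Icc a b, HasDerivWithinAt V (-(⟪V t, γ' t⟫ • γ t)) (Icc a b) t := by
  obtain ⟨-, hint, hV⟩ := hV
  intro t ht
  have hVcont : ContinuousOn V (Icc a b) := by
    have hprim := intervalIntegral.continuousOn_primitive_interval' hint left_mem_uIcc
    rw [uIcc_of_le (ht.1.trans ht.2)] at hprim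
    exact (continuousOn_const.sub hprim).congr hV
  have hcont : ContinuousOn (fun s ↦ ⟪V s, γ' s⟫ • γ s) (Icc a b) :=
    ContinuousOn.smul (f := fun s ↦ ⟪V s, γ' s⟫) (hVcont.inner hγ') hγ
  exact ((hasDerivWithinAt_integral_Icc hcont ht).const_sub v).congr hV (hV t ht)

theorem inner_curve_eq_zero (hV : IsParTrans γ (deriv γ) a b v V)
    (h : IsUnitTangentField γ E a b) (hv : ⟪v, γ a⟫ = 0)
    (hdV : ∀ t ∈ Icc a b, HasDerivWithinAt V (-(⟪V t, deriv γ t⟫ • γ t)) (Icc a b) t) :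
    ∀ t ∈ Icc a b, ⟪V t, γ t⟫ = 0 := by
  have hconst := eq_left_of_hasDerivWithinAt_zero (f := fun t ↦ ⟪V t, γ t⟫) fun t ht ↦
    ((hdV t ht).inner ℝ (h.differentiableAt_curve ht).hasDerivAt.hasDerivWithinAt).congr_deriv (by
      rw [inner_neg_left, real_inner_smul_left, real_inner_self_eq_norm_sq, h.norm_curve t ht]
      ring)
  intro t ht
  rw [hconst t ht, hV.1, hv]

theorem eq_tangentRotation_frameTransport (hV : IsParTrans γ (deriv γ) a b v V)
    (h : IsUnitTangentField γ E a b) (hab : a < b) (hv : ⟪v, γ a⟫ = 0) :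
    V b = tangentRotation (γ b) (-∫ t in a..b, turningRate γ E t)
      (frameTransport γ E a b v) := by
  have hγ' : ContinuousOn (deriv γ) (Icc a b) := fun t ht ↦
    ((h.contDiffAt_curve t ht).derivWithin (m := 0) (by simp)).continuousAt.continuousWithinAt
  have hdV := hV.hasDerivWithinAt
    (fun t ht ↦ (h.contDiffAt_curve t ht).continuousAt.continuousWithinAt) hγ'
  have hperp := hV.inner_curve_eq_zero h hv hdV
  have hx : ∀ t ∈ Icc a b, HasDerivWithinAt (fun t ↦ ⟪V t, E t⟫)
      (turningRate γ E t * ⟪V t, conormal γ E t⟫) (Icc a b) t := fun t ht ↦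
    ((hdV t ht).inner ℝ (h.differentiableAt_field ht).hasDerivAt.hasDerivWithinAt).congr_deriv (by
      rw [h.deriv_field hab ht, inner_neg_left, real_inner_smul_left, real_inner_comm (E t),
        h.inner_field_curve t ht, inner_sub_right, real_inner_smul_right, real_inner_smul_right,
        hperp t ht]
      ring)
  have hy : ∀ t ∈ Icc a b, HasDerivWithinAt (fun t ↦ ⟪V t, conormal γ E t⟫)
      (-(turningRate γ E t * ⟪V t, E t⟫)) (Icc a b) t := fun t ht ↦
    ((hdV t ht).inner ℝ
      (h.differentiableAt_conormal ht).hasDerivAt.hasDerivWithinAt).congr_deriv (by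
      rw [h.deriv_conormal hab ht, inner_neg_left, real_inner_smul_left, inner_curve_conormal,
        inner_sub_right, real_inner_smul_right, real_inner_smul_right, hperp t ht]
      ring)
  have hΘ : ∀ t ∈ Icc a b, HasDerivWithinAt (fun x ↦ ∫ s in a..x, turningRate γ E s)
      (turningRate γ E t) (Icc a b) t := fun t ht ↦
    hasDerivWithinAt_integral_Icc
      (fun s hs ↦ (h.continuousAt_turningRate hs).continuousWithinAt) ht
  have hb : b ∈ Icc a b := right_mem_Icc.2 hab.le
  obtain ⟨hxb, hyb⟩ :=
    eq_cos_add_sin_of_hasDerivWithinAt hx hy hΘ intervalIntegral.integral_same b hb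
  have hγE : cross3 (γ b) (E b) = conormal γ E b := rfl
  rw [h.eq_frame hb (V b), hperp b hb, hxb, hyb, hV.1]
  simp only [tangentRotation, frameTransport, cross3_add_right, cross3_smul_right,
    h.cross3_conormal hb, hγE, Real.cos_neg, Real.sin_neg]
  module

end IsParTrans

lemma inner_frameTransport_curve {γ E : ℝ → E3} {a b : ℝ} (hb : ⟪E b, γ b⟫ = 0) (v : E3) :
    ⟪frameTransport γ E a b v, γ b⟫ = 0 := by
  rw [frameTransport, inner_add_left, real_inner_smul_left, real_inner_smul_left, hb,
    inner_conormal_curve]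
  ring

theorem IsParTrans.eq_tangentRotation_of_integral_turningRate_eq {γ γt E Et V Vt : ℝ → E3}
    {a b θ : ℝ} {v : E3} {n : ℤ} (hV : IsParTrans γ (deriv γ) a b v V)
    (hVt : IsParTrans γt (deriv γt) a b v Vt) (h : IsUnitTangentField γ E a b)
    (ht : IsUnitTangentField γt Et a b) (hab : a < b) (hv : ⟪v, γ a⟫ = 0)
    (hγa : γt a = γ a) (hγb : γt b = γ b) (hEa : Et a = E a) (hEb : Et b = E b)
    (hturn : ∫ t in a..b, turningRate γt Et t =
      (∫ t in a..b, turningRate γ E t) - θ + n * (2 * Real.pi)) :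
    Vt b = tangentRotation (γ b) θ (V b) := by
  have hb : b ∈ Icc a b := right_mem_Icc.2 hab.le
  have hframe : frameTransport γt Et a b v = frameTransport γ E a b v := by
    simp only [frameTransport, conormal, hγa, hγb, hEa, hEb]
  have hangle : -∫ t in a..b, turningRate γt Et t =
      θ + -(∫ t in a..b, turningRate γ E t) + (-n : ℤ) * (2 * Real.pi) := by
    rw [hturn]; push_cast; ring
  rw [hV.eq_tangentRotation_frameTransport h hab hv,
    hVt.eq_tangentRotation_frameTransport ht hab (hγa ▸ hv), hframe, hangle, hγb,
    tangentRotation_add_int_mul_two_pi,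
    tangentRotation_tangentRotation (h.norm_curve b hb)
      (inner_frameTransport_curve (h.inner_field_curve b hb) v)]

/-! ### Pushing a curve off along its normals -/

/-- The spherical curve obtained from the planar curve `(u, b)` by means of the coordinates
(curve parameter, signed distance) on a strip around `γ`. -/
def normalPush (γ E : ℝ → E3) (u b : ℝ → ℝ) (t : ℝ) : E3 :=
  Real.cos (b t) • γ (u t) + Real.sin (b t) • conormal γ E (u t)

section NormalPush

variable {γ E : ℝ → E3} {u b m : ℝ → ℝ} {c d t : ℝ}

lemma contDiffAt_normalPush {n : WithTop ℕ∞} (hγ : ContDiffAt ℝ n γ (u t))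
    (hE : ContDiffAt ℝ n E (u t)) (hu : ContDiffAt ℝ n u t) (hb : ContDiffAt ℝ n b t) :
    ContDiffAt ℝ n (normalPush γ E u b) t :=
  (hb.cos.smul (hγ.comp t hu)).add (hb.sin.smul ((contDiffAt_cross3 hγ hE).comp t hu))

lemma normalPush_of_eq_zero (hb : b t = 0) : normalPush γ E u b t = γ (u t) := by
  rw [normalPush, hb, Real.cos_zero, Real.sin_zero, one_smul, zero_smul, add_zero]

namespace IsUnitTangentField

theorem comp_normalPush (h : IsUnitTangentField γ E c d) (hu : ContDiff ℝ 1 u)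
    (hb : ContDiff ℝ 1 b) (hmaps : MapsTo u (Icc c d) (Icc c d)) :
    IsUnitTangentField (normalPush γ E u b) (E ∘ u) c d where
  contDiffAt_curve t ht := contDiffAt_normalPush (h.contDiffAt_curve _ (hmaps ht))
    (h.contDiffAt_field _ (hmaps ht)) hu.contDiffAt hb.contDiffAt
  contDiffAt_field t ht := (h.contDiffAt_field _ (hmaps ht)).comp t hu.contDiffAt
  norm_curve t ht := by
    have hsq : ‖normalPush γ E u b t‖ ^ 2 = 1 := by
      rw [normalPush, norm_add_sq_real, norm_smul, norm_smul, real_inner_smul_left,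
        real_inner_smul_right, inner_curve_conormal, h.norm_curve _ (hmaps ht),
        h.norm_conormal (hmaps ht)]
      simp only [Real.norm_eq_abs, mul_one, mul_zero, add_zero, sq_abs, Real.cos_sq_add_sin_sq]
    exact (pow_eq_one_iff_of_nonneg (norm_nonneg _) two_ne_zero).1 hsq
  norm_field t ht := h.norm_field _ (hmaps ht)
  inner_field_curve t ht := by
    rw [Function.comp_apply, normalPush, inner_add_right, real_inner_smul_right,
      real_inner_smul_right, h.inner_field_curve _ (hmaps ht), inner_field_conormal]
    ring

lemma conormal_normalPush (h : IsUnitTangentField γ E c d) (hut : u t ∈ Icc c d) :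
    conormal (normalPush γ E u b) (E ∘ u) t =
      Real.cos (b t) • conormal γ E (u t) - Real.sin (b t) • γ (u t) := by
  have hEN : cross3 (E (u t)) (conormal γ E (u t)) = γ (u t) :=
    cross3_self_cross3 (h.norm_field _ hut) (h.inner_field_curve _ hut)
  have hEγ : cross3 (E (u t)) (γ (u t)) = -conormal γ E (u t) := (neg_cross3 _ _).symm
  rw [conormal, ← neg_cross3, Function.comp_apply, normalPush, cross3_add_right,
    cross3_smul_right, cross3_smul_right, hEN, hEγ]
  module

theorem turningRate_normalPush (h : IsUnitTangentField γ E c d) (hcd : c < d)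
    (hm : ∀ s ∈ Icc c d, deriv γ s = m s • E s) (hu : DifferentiableAt ℝ u t)
    (hut : u t ∈ Icc c d) :
    turningRate (normalPush γ E u b) (E ∘ u) t =
      deriv u t * (turningRate γ E (u t) * Real.cos (b t) + m (u t) * Real.sin (b t)) := by
  rw [turningRate, deriv.scomp t (h.differentiableAt_field hut) hu, h.conormal_normalPush hut,
    h.deriv_field hcd hut, hm _ hut]
  simp only [real_inner_smul_left, real_inner_smul_right, inner_sub_left, inner_sub_right,
    real_inner_self_eq_norm_sq, h.norm_curve _ hut, h.norm_field _ hut, h.norm_conormal hut,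
    inner_curve_conormal, inner_conormal_curve]
  ring

theorem deriv_normalPush (h : IsUnitTangentField γ E c d) (hcd : c < d)
    (hm : ∀ s ∈ Icc c d, deriv γ s = m s • E s) (hu : DifferentiableAt ℝ u t)
    (hb : DifferentiableAt ℝ b t) (hut : u t ∈ Icc c d) :
    deriv (normalPush γ E u b) t =
      (deriv u t * (m (u t) * Real.cos (b t) - turningRate γ E (u t) * Real.sin (b t))) • E (u t) +
        deriv b t • conormal (normalPush γ E u b) (E ∘ u) t := by
  have hγu := (h.differentiableAt_curve hut).hasDerivAt.scomp t hu.hasDerivAt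
  have hNu := (h.differentiableAt_conormal hut).hasDerivAt.scomp t hu.hasDerivAt
  have hderiv := (hb.hasDerivAt.cos.smul hγu).add (hb.hasDerivAt.sin.smul hNu)
  have hN : ⟪conormal γ E (u t), deriv γ (u t)⟫ = 0 := by
    rw [hm _ hut, real_inner_smul_right, real_inner_comm, inner_field_conormal, mul_zero]
  rw [h.conormal_normalPush hut]
  refine hderiv.deriv.trans ?_
  rw [h.deriv_conormal hcd hut, hN, hm _ hut]
  simp only [Function.comp_apply]
  module

theorem deriv_normalPush_ne_zero (h : IsUnitTangentField γ E c d) (hcd : c < d)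
    (hm : ∀ s ∈ Icc c d, deriv γ s = m s • E s) (hu : ContDiff ℝ 1 u) (hb : ContDiff ℝ 1 b)
    (hmaps : MapsTo u (Icc c d) (Icc c d)) (ht : t ∈ Icc c d)
    (hstrip : turningRate γ E (u t) * Real.sin (b t) < m (u t) * Real.cos (b t))
    (himm : deriv u t = 0 → deriv b t ≠ 0) : deriv (normalPush γ E u b) t ≠ 0 := by
  intro hzero
  have hEE : ⟪E (u t), E (u t)⟫ = 1 := by
    rw [real_inner_self_eq_norm_sq, h.norm_field _ (hmaps ht), one_pow]
  have hEN : ⟪E (u t), conormal (normalPush γ E u b) (E ∘ u) t⟫ = 0 :=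
    inner_field_conormal _ (E ∘ u) t
  rw [h.deriv_normalPush hcd hm (hu.differentiable one_ne_zero t)
    (hb.differentiable one_ne_zero t) (hmaps ht)] at hzero
  have hu' : deriv u t = 0 := by
    have := congrArg (fun v ↦ ⟪E (u t), v⟫) hzero
    simp only [inner_add_right, real_inner_smul_right, hEE, hEN, inner_zero_right, mul_one,
      mul_zero, add_zero] at this
    exact (mul_eq_zero.1 this).resolve_right (sub_pos.2 hstrip).ne'
  have hN : conormal (normalPush γ E u b) (E ∘ u) t ≠ 0 :=
    norm_ne_zero_iff.1 (((h.comp_normalPush hu hb hmaps).norm_conormal ht).trans_ne one_ne_zero)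
  rw [hu', zero_mul, zero_smul, zero_add, smul_eq_zero] at hzero
  exact hN (hzero.resolve_left (himm hu'))

theorem eventually_strip_mem (h : IsUnitTangentField γ E c d) {U : Set E3} (hU : IsOpen U)
    (hγU : ∀ s ∈ Icc c d, γ s ∈ U) :
    ∀ᶠ w in 𝓝 (0 : ℝ), ∀ s ∈ Icc c d,
      Real.cos w • γ s + Real.sin w • conormal γ E s ∈ U := by
  refine isCompact_Icc.eventually_forall_of_forall_eventually fun s hs ↦ ?_
  have hγ := (h.contDiffAt_curve s hs).continuousAt
  have hN := (h.contDiffAt_conormal hs).continuousAt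
  have hcont : ContinuousAt (fun p : ℝ × ℝ ↦
      Real.cos p.1 • γ p.2 + Real.sin p.1 • conormal γ E p.2) (0, s) :=
    ((Real.continuous_cos.comp continuous_fst).continuousAt.smul
      (hγ.comp_of_eq continuousAt_snd rfl)).add
      ((Real.continuous_sin.comp continuous_fst).continuousAt.smul
        (hN.comp_of_eq continuousAt_snd rfl))
  refine hcont.eventually_mem (hU.mem_nhds ?_)
  simpa using hγU s hs

theorem eventually_turningRate_mul_sin_lt (h : IsUnitTangentField γ E c d)
    (hm : ∀ s ∈ Icc c d, ContinuousAt m s) (hm_pos : ∀ s ∈ Icc c d, 0 < m s) :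
    ∀ᶠ w in 𝓝 (0 : ℝ), ∀ s ∈ Icc c d,
      turningRate γ E s * Real.sin w < m s * Real.cos w := by
  refine isCompact_Icc.eventually_forall_of_forall_eventually fun s hs ↦ ?_
  have hleft : ContinuousAt (fun p : ℝ × ℝ ↦ turningRate γ E p.2 * Real.sin p.1) (0, s) :=
    ((h.continuousAt_turningRate hs).comp_of_eq continuousAt_snd rfl).mul
      (Real.continuous_sin.comp continuous_fst).continuousAt
  have hright : ContinuousAt (fun p : ℝ × ℝ ↦ m p.2 * Real.cos p.1) (0, s) :=
    ((hm s hs).comp_of_eq continuousAt_snd rfl).mul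
      (Real.continuous_cos.comp continuous_fst).continuousAt
  refine hleft.eventually_lt hright ?_
  simpa using hm_pos s hs

theorem exists_uniform_strip (h : IsUnitTangentField γ E c d) {U : Set E3} (hU : IsOpen U)
    (hγU : ∀ s ∈ Icc c d, γ s ∈ U) (hm : ∀ s ∈ Icc c d, ContinuousAt m s)
    (hm_pos : ∀ s ∈ Icc c d, 0 < m s) :
    ∃ δ > 0, ∀ w : ℝ, |w| ≤ δ → ∀ s ∈ Icc c d,
      Real.cos w • γ s + Real.sin w • conormal γ E s ∈ U ∧
        turningRate γ E s * Real.sin w < m s * Real.cos w := by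
  obtain ⟨δ, hδ, hstrip⟩ := Metric.nhds_basis_closedBall.eventually_iff.1
    ((h.eventually_strip_mem hU hγU).and (h.eventually_turningRate_mul_sin_lt hm hm_pos))
  refine ⟨δ, hδ, fun w hw s hs ↦ ?_⟩
  have hw' : w ∈ Metric.closedBall 0 δ := mem_closedBall_zero_iff.2 hw
  exact ⟨(hstrip hw').1 s hs, (hstrip hw').2 s hs⟩

end IsUnitTangentField

end NormalPush

/-- The unit tangent field of an immersed curve. -/
def unitTangent (β : ℝ → E3) (t : ℝ) : E3 := ‖deriv β t‖⁻¹ • deriv β t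

section UnitTangent

variable {β : ℝ → E3} {c d t : ℝ}

lemma deriv_eq_norm_smul_unitTangent (ht : deriv β t ≠ 0) :
    deriv β t = ‖deriv β t‖ • unitTangent β t := by
  rw [unitTangent, smul_inv_smul₀ (norm_ne_zero_iff.2 ht)]

lemma contDiffAt_unitTangent (hβ : ContDiff ℝ (⊤ : ℕ∞) β) (ht : deriv β t ≠ 0) :
    ContDiffAt ℝ (⊤ : ℕ∞) (unitTangent β) t := by
  have hβ' : ContDiffAt ℝ (⊤ : ℕ∞) (deriv β) t := ((contDiff_infty_iff_deriv.1 hβ).2).contDiffAt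
  exact ((hβ'.norm ℝ ht).inv (norm_ne_zero_iff.2 ht)).smul hβ'

theorem isUnitTangentField_unitTangent (hβ : ContDiff ℝ (⊤ : ℕ∞) β) (hcd : c < d)
    (hsph : ∀ t ∈ Icc c d, ‖β t‖ = 1) (himm : ∀ t ∈ Icc c d, deriv β t ≠ 0) :
    IsUnitTangentField β (unitTangent β) c d where
  contDiffAt_curve _ _ := hβ.contDiffAt.of_le (mod_cast le_top)
  contDiffAt_field t ht := (contDiffAt_unitTangent hβ (himm t ht)).of_le (mod_cast le_top)
  norm_curve := hsph
  norm_field t ht := norm_smul_inv_norm (himm t ht)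
  inner_field_curve t ht := by
    have hd : DifferentiableAt ℝ β t := hβ.differentiable (by simp) t
    have hββ := inner_deriv_left_eq_neg_inner_deriv_right (uniqueDiffOn_Icc hcd t ht) ht hd hd
      (c := 1) fun s hs ↦ by rw [real_inner_self_eq_norm_sq, hsph s hs, one_pow]
    rw [real_inner_comm] at hββ
    rw [unitTangent, real_inner_smul_left, real_inner_comm, self_eq_neg.1 hββ, mul_zero]

end UnitTangent

/-! ### Planar loops -/

/-- A bump function at the centre of `[0, 1]`, on whose support the loops are drawn. -/
def loopBump : ContDiffBump (1 / 2 : ℝ) := ⟨1 / 16, 1 / 8, by norm_num, by norm_num⟩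

/-- A bump function equal to `1` on the support of `loopBump` and supported in `[1/4, 3/4]`. -/
def collarBump : ContDiffBump (1 / 2 : ℝ) := ⟨1 / 8, 1 / 4, by norm_num, by norm_num⟩

/-- The polar angle along `N` loops. All `N` revolutions take place where `loopBump = 1`. The
steady term `8 t - 4` keeps the angular velocity at least `8`, and the angle within `1` of a
multiple of `2π` on the rest of the support of `loopBump`. -/
def loopPhase (N : ℕ) (t : ℝ) : ℝ :=
  8 * t - 4 + N * (2 * Real.pi) * Real.smoothTransition (8 * t - 7 / 2)

/-- Abscissa of a planar curve that leaves the segment `[0, 1] × {0}`, performs `N` loops and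
returns to the segment. -/
def loopAbscissa (N : ℕ) (t : ℝ) : ℝ := t + loopBump t * Real.cos (loopPhase N t) / 4

/-- Ordinate of the planar curve whose abscissa is `loopAbscissa`. -/
def loopOrdinate (N : ℕ) (t : ℝ) : ℝ := collarBump t * Real.sin (loopPhase N t)

/-- The part of the derivative of `loopAbscissa` that stays bounded as the number of loops grows. -/
def loopDrift (N : ℕ) (t : ℝ) : ℝ := 1 + deriv loopBump t * Real.cos (loopPhase N t) / 4

/-- The weight with which `-loopOrdinate` enters the derivative of `loopAbscissa`. That it is
nonnegative means that all loops are run through in the same direction. -/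
def loopWeight (N : ℕ) (t : ℝ) : ℝ := loopBump t * deriv (loopPhase N) t / 4

section Loops

variable {N : ℕ} {t : ℝ}

lemma contDiff_loopPhase {n : ℕ∞} : ContDiff ℝ n (loopPhase N) := by
  have := Real.smoothTransition.contDiff (n := n)
  unfold loopPhase
  fun_prop

lemma contDiff_loopAbscissa {n : ℕ∞} : ContDiff ℝ n (loopAbscissa N) :=
  contDiff_id.add ((loopBump.contDiff.mul contDiff_loopPhase.cos).div_const 4)

lemma contDiff_loopOrdinate {n : ℕ∞} : ContDiff ℝ n (loopOrdinate N) :=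
  collarBump.contDiff.mul contDiff_loopPhase.sin

lemma abs_sub_half_lt_of_loopBump_ne_zero (ht : loopBump t ≠ 0) : |t - 1 / 2| < 1 / 8 := by
  contrapose! ht
  exact loopBump.zero_of_le_dist ht

lemma loopBump_eq_one (ht : |t - 1 / 2| ≤ 1 / 16) : loopBump t = 1 :=
  loopBump.one_of_mem_closedBall ht

lemma loopBump_mul_collarBump : loopBump t * collarBump t = loopBump t := by
  by_cases ht : loopBump t = 0
  · rw [ht, zero_mul]
  · rw [collarBump.one_of_mem_closedBall (abs_sub_half_lt_of_loopBump_ne_zero ht).le, mul_one]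

lemma collarBump_eq_zero (ht : t ≤ 1 / 4 ∨ 3 / 4 ≤ t) : collarBump t = 0 := by
  refine collarBump.zero_of_le_dist (le_abs.2 ?_)
  rcases ht with ht | ht
  · right; norm_num [collarBump]; linarith
  · left; norm_num [collarBump]; linarith

lemma loopOrdinate_eq_zero (ht : t ≤ 1 / 4 ∨ 3 / 4 ≤ t) : loopOrdinate N t = 0 := by
  rw [loopOrdinate, collarBump_eq_zero ht, zero_mul]

lemma loopAbscissa_eq_self (ht : t ≤ 1 / 4 ∨ 3 / 4 ≤ t) : loopAbscissa N t = t := by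
  rw [loopAbscissa, ← loopBump_mul_collarBump, collarBump_eq_zero ht]
  ring

lemma abs_loopOrdinate_le_one : |loopOrdinate N t| ≤ 1 := by
  rw [loopOrdinate, abs_mul, abs_of_nonneg collarBump.nonneg]
  exact mul_le_one₀ collarBump.le_one (abs_nonneg _) (Real.abs_sin_le_one _)

lemma mapsTo_loopAbscissa : MapsTo (loopAbscissa N) (Icc 0 1) (Icc 0 1) := by
  intro t ht
  by_cases hbump : loopBump t = 0
  · simpa only [loopAbscissa, hbump, zero_mul, zero_div, add_zero] using ht
  have hclose := abs_lt.1 (abs_sub_half_lt_of_loopBump_ne_zero hbump)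
  have hshift : |loopBump t * Real.cos (loopPhase N t)| ≤ 1 := by
    rw [abs_mul, abs_of_nonneg loopBump.nonneg]
    exact mul_le_one₀ loopBump.le_one (abs_nonneg _) (Real.abs_cos_le_one _)
  rw [abs_le] at hshift
  constructor <;> rw [loopAbscissa] <;> linarith

lemma hasDerivAt_loopPhase : HasDerivAt (loopPhase N) (deriv (loopPhase N) t) t :=
  ((contDiff_loopPhase (n := 1)).differentiable (by simp) t).hasDerivAt

lemma eight_le_deriv_loopPhase : 8 ≤ deriv (loopPhase N) t := by
  have hmono : Monotone fun t ↦ N * (2 * Real.pi) * Real.smoothTransition (8 * t - 7 / 2) :=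
    fun x y hxy ↦ mul_le_mul_of_nonneg_left (Real.smoothTransition.monotone (by linarith))
      (by positivity)
  have hd : DifferentiableAt ℝ
      (fun t ↦ N * (2 * Real.pi) * Real.smoothTransition (8 * t - 7 / 2)) t := by
    have := (Real.smoothTransition.contDiff (n := 1)).differentiable (by simp)
    fun_prop
  have hlin : HasDerivAt (fun t : ℝ ↦ 8 * t - 4) 8 t := by
    simpa using ((hasDerivAt_id t).const_mul 8).sub_const 4
  rw [show deriv (loopPhase N) t = _ from (hlin.add hd.hasDerivAt).deriv]
  linarith [hmono.deriv_nonneg (x := t)]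

lemma cos_loopPhase_pos (ht : loopBump t ≠ 0) (ht' : loopBump t ≠ 1) :
    0 < Real.cos (loopPhase N t) := by
  have hclose := abs_lt.1 (abs_sub_half_lt_of_loopBump_ne_zero ht)
  have hcos : 0 < Real.cos (8 * t - 4) :=
    Real.cos_pos_of_mem_Ioo ⟨by linarith [Real.pi_gt_three], by linarith [Real.pi_gt_three]⟩
  have hfar : 1 / 16 < |t - 1 / 2| := by
    contrapose! ht'
    exact loopBump_eq_one ht'
  rcases lt_abs.1 hfar with h | h
  · rwa [loopPhase, Real.smoothTransition.one_of_one_le (by linarith), mul_one,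
      Real.cos_add_nat_mul_two_pi]
  · rwa [loopPhase, Real.smoothTransition.zero_of_nonpos (by linarith), mul_zero, add_zero]

lemma deriv_loopAbscissa :
    deriv (loopAbscissa N) t = loopDrift N t - loopWeight N t * loopOrdinate N t := by
  have hbump : HasDerivAt loopBump (deriv loopBump t) t :=
    ((loopBump.contDiff (n := 1)).differentiable (by simp) t).hasDerivAt
  refine ((hasDerivAt_id t).add ((hbump.mul hasDerivAt_loopPhase.cos).div_const 4)).deriv.trans ?_
  rw [loopDrift, loopWeight, loopOrdinate]
  linear_combination deriv (loopPhase N) t / 4 * Real.sin (loopPhase N t) *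
    loopBump_mul_collarBump (t := t)

lemma deriv_loopOrdinate (ht : loopBump t ≠ 0) :
    deriv (loopOrdinate N) t = deriv (loopPhase N) t * Real.cos (loopPhase N t) := by
  have hcollar : collarBump =ᶠ[𝓝 t] 1 :=
    collarBump.eventuallyEq_one_of_mem_ball (abs_sub_half_lt_of_loopBump_ne_zero ht)
  have hsin : loopOrdinate N =ᶠ[𝓝 t] fun s ↦ Real.sin (loopPhase N s) := by
    filter_upwards [hcollar] with s hs
    rw [loopOrdinate, hs, Pi.one_apply, one_mul]
  rw [hsin.deriv_eq, hasDerivAt_loopPhase.sin.deriv, mul_comm]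

lemma deriv_loopBump_eq_zero (ht : loopBump t = 0 ∨ loopBump t = 1) : deriv loopBump t = 0 := by
  rcases ht with ht | ht
  · exact IsLocalMin.deriv_eq_zero (Eventually.of_forall fun s ↦ by rw [ht]; exact loopBump.nonneg)
  · exact IsLocalMax.deriv_eq_zero (Eventually.of_forall fun s ↦ by rw [ht]; exact loopBump.le_one)

theorem deriv_loopOrdinate_ne_zero (hu : deriv (loopAbscissa N) t = 0) :
    deriv (loopOrdinate N) t ≠ 0 := by
  rw [deriv_loopAbscissa, loopDrift, loopWeight] at hu
  have hphase := eight_le_deriv_loopPhase (N := N) (t := t)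
  have hbump : loopBump t ≠ 0 := by
    intro h
    rw [deriv_loopBump_eq_zero (.inl h), h] at hu
    norm_num at hu
  rw [deriv_loopOrdinate hbump]
  refine mul_ne_zero (by positivity) fun hcos ↦ ?_
  have hone : loopBump t = 1 := by
    by_contra h
    exact (cos_loopPhase_pos hbump h).ne' hcos
  have hcollar : collarBump t = 1 := by simpa [hone] using loopBump_mul_collarBump (t := t)
  rw [hcos, hone, loopOrdinate, hcollar, mul_zero, zero_div, one_mul, one_mul] at hu
  have hsin : Real.sin (loopPhase N t) ^ 2 = 1 := by rw [Real.sin_sq, hcos]; norm_num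
  rcases sq_eq_one_iff.1 hsin with h | h <;> rw [h] at hu <;> linarith

lemma exists_abs_loopDrift_le :
    ∃ M : ℝ, ∀ (N : ℕ) (t : ℝ), |loopDrift N t| ≤ M := by
  obtain ⟨C, hC⟩ := loopBump.hasCompactSupport.deriv.exists_bound_of_continuous
    ((loopBump.contDiff (n := 1)).continuous_deriv le_rfl)
  have hC₀ : 0 ≤ C := (norm_nonneg _).trans (hC 0)
  refine ⟨1 + C, fun N t ↦ (abs_add_le _ _).trans ?_⟩
  rw [abs_one, abs_div, abs_mul, Nat.abs_ofNat]
  have := mul_le_mul (hC t) (Real.abs_cos_le_one (loopPhase N t)) (abs_nonneg _) hC₀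
  rw [Real.norm_eq_abs] at this
  linarith

lemma continuous_loopWeight : Continuous (loopWeight N) :=
  (loopBump.continuous.mul ((contDiff_loopPhase (n := 1)).continuous_deriv le_rfl)).div_const 4

lemma loopWeight_nonneg : 0 ≤ loopWeight N t :=
  div_nonneg (mul_nonneg loopBump.nonneg (by linarith [eight_le_deriv_loopPhase (N := N) (t := t)]))
    zero_le_four

lemma hasDerivAt_loopPhase_sub_sin (ht : |t - 1 / 2| ≤ 1 / 16) :
    HasDerivAt (fun t ↦ loopPhase N t / 8 - Real.sin (2 * loopPhase N t) / 16)
      (loopWeight N t * loopOrdinate N t ^ 2) t := by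
  have hone := loopBump_eq_one ht
  have hcollar : collarBump t = 1 := by simpa [hone] using loopBump_mul_collarBump (t := t)
  have hψ := hasDerivAt_loopPhase (N := N) (t := t)
  refine ((hψ.div_const 8).sub ((hψ.const_mul 2).sin.div_const 16)).congr_deriv ?_
  rw [loopWeight, loopOrdinate, hone, hcollar, Real.cos_two_mul, Real.cos_sq']
  ring

theorem mul_pi_div_four_le_integral_loop :
    N * Real.pi / 4 ≤
      ∫ t in (0 : ℝ)..1, loopWeight N t * loopOrdinate N t ^ 2 := by
  set f := fun t ↦ loopWeight N t * loopOrdinate N t ^ 2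
  have hf : Continuous f :=
    continuous_loopWeight.mul ((contDiff_loopOrdinate (n := 1)).continuous.pow 2)
  have hmid : ∫ t in (7 / 16 : ℝ)..(9 / 16), f t ≤ ∫ t in (0 : ℝ)..1, f t :=
    intervalIntegral.integral_mono_interval (by norm_num) (by norm_num) (by norm_num)
      (Eventually.of_forall fun _ ↦ mul_nonneg loopWeight_nonneg (sq_nonneg _))
      (hf.intervalIntegrable _ _)
  have hstart : loopPhase N (7 / 16) = -(1 / 2) := by norm_num [loopPhase]
  have hend : loopPhase N (9 / 16) = 1 / 2 + N * (2 * Real.pi) := by norm_num [loopPhase]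
  have hsin : Real.sin (2 * (1 / 2 + N * (2 * Real.pi))) = Real.sin 1 := by
    rw [show 2 * (1 / 2 + N * (2 * Real.pi)) = 1 + (2 * N : ℕ) * (2 * Real.pi) by
      push_cast; ring, Real.sin_add_nat_mul_two_pi]
  rw [intervalIntegral.integral_eq_sub_of_hasDerivAt (fun t ht ↦ hasDerivAt_loopPhase_sub_sin ?_)
    (hf.intervalIntegrable _ _), hstart, hend, hsin, show 2 * -(1 / 2 : ℝ) = -1 by norm_num,
    Real.sin_neg] at hmid
  · linarith [Real.sin_le_one 1]
  · rw [uIcc_of_le (by norm_num)] at ht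
    exact abs_le.2 ⟨by linarith [ht.1], by linarith [ht.2]⟩

end Loops

/-! ### Total turning of a pushed-off curve -/

/-- The total turning over `[0, 1]` of the field `E ∘ u` along `normalPush γ E u b`, where `k` is
the turning rate of the unit tangent `E` of `γ` and `m` is the speed of `γ`. -/
def stripTurning (k m u b : ℝ → ℝ) : ℝ :=
  ∫ t in (0 : ℝ)..1, deriv u t * (k (u t) * Real.cos (b t) + m (u t) * Real.sin (b t))

section StripTurning

variable {k m u b : ℝ → ℝ} {K M m₀ δ : ℝ}

theorem IsUnitTangentField.integral_turningRate_normalPush {γ E : ℝ → E3}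
    (h : IsUnitTangentField γ E 0 1) (hm : ∀ s ∈ Icc (0 : ℝ) 1, deriv γ s = m s • E s)
    (hu : Differentiable ℝ u) (hmaps : MapsTo u (Icc 0 1) (Icc 0 1)) :
    ∫ t in (0 : ℝ)..1, turningRate (normalPush γ E u b) (E ∘ u) t =
      stripTurning (turningRate γ E) m u b :=
  intervalIntegral.integral_congr fun t ht ↦
    h.turningRate_normalPush one_pos hm (hu t) (hmaps (uIcc_of_le (zero_le_one' ℝ) ▸ ht))

lemma stripTurning_zero_right (hk : ContinuousOn k (Icc 0 1)) (hu : ContDiff ℝ 1 u)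
    (hmaps : MapsTo u (Icc 0 1) (Icc 0 1)) (hu₀ : u 0 = 0) (hu₁ : u 1 = 1) :
    stripTurning k m u 0 = ∫ t in (0 : ℝ)..1, k t := by
  have hsubst := intervalIntegral.integral_comp_mul_deriv' (a := 0) (b := 1) (g := k)
    (fun t _ ↦ (hu.differentiable one_ne_zero t).hasDerivAt)
    (hu.continuous_deriv le_rfl).continuousOn
    (hk.mono (by rw [uIcc_of_le zero_le_one]; exact hmaps.image_subset))
  rw [hu₀, hu₁] at hsubst
  simpa [stripTurning, mul_comm] using hsubst

lemma continuousOn_stripTurning_integrand (hk : ContinuousOn k (Icc 0 1))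
    (hm : ContinuousOn m (Icc 0 1)) (hu : ContDiff ℝ 1 u) (hmaps : MapsTo u (Icc 0 1) (Icc 0 1))
    (hb : Continuous b) :
    ContinuousOn (fun t ↦ deriv u t * (k (u t) * Real.cos (b t) + m (u t) * Real.sin (b t)))
      (Icc 0 1) :=
  (hu.continuous_deriv le_rfl).continuousOn.mul
    (((hk.comp hu.continuous.continuousOn hmaps).mul (Real.continuous_cos.comp hb).continuousOn).add
      ((hm.comp hu.continuous.continuousOn hmaps).mul (Real.continuous_sin.comp hb).continuousOn))

theorem continuous_stripTurning_mul (hk : ContinuousOn k (Icc 0 1)) (hm : ContinuousOn m (Icc 0 1))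
    (hu : ContDiff ℝ 1 u) (hmaps : MapsTo u (Icc 0 1) (Icc 0 1)) (hb : Continuous b) :
    Continuous fun s : ℝ ↦ stripTurning k m u fun t ↦ s * b t := by
  have hbound : ContinuousOn (fun t ↦ |deriv u t| * (|k (u t)| + |m (u t)|)) (Icc 0 1) :=
    (hu.continuous_deriv le_rfl).continuousOn.abs.mul
      ((hk.comp hu.continuous.continuousOn hmaps).abs.add
        (hm.comp hu.continuous.continuousOn hmaps).abs)
  refine intervalIntegral.continuous_of_dominated_interval (fun s ↦ ?_)
    (fun s ↦ Eventually.of_forall fun t _ ↦ ?_)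
    (hbound.intervalIntegrable_of_Icc zero_le_one) (Eventually.of_forall fun t _ ↦ by fun_prop)
  · rw [uIoc_of_le zero_le_one]
    exact ((continuousOn_stripTurning_integrand hk hm hu hmaps (hb.const_mul s)).mono
      Ioc_subset_Icc_self).aestronglyMeasurable measurableSet_Ioc
  · rw [Real.norm_eq_abs, abs_mul]
    refine mul_le_mul_of_nonneg_left ((abs_add_le _ _).trans ?_) (abs_nonneg _)
    rw [abs_mul, abs_mul]
    exact add_le_add (mul_le_of_le_one_right (abs_nonneg _) (Real.abs_cos_le_one _))
      (mul_le_of_le_one_right (abs_nonneg _) (Real.abs_sin_le_one _))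

lemma sq_div_two_le_mul_sin {w : ℝ} (hw : |w| ≤ 1) : w ^ 2 / 2 ≤ w * Real.sin w := by
  wlog hw₀ : 0 ≤ w generalizing w
  · simpa using this (w := -w) (by rwa [abs_neg]) (by linarith)
  have hsin := Real.mul_le_sin hw₀ (by linarith [le_abs_self w, Real.pi_gt_three])
  have hpi : 1 / 2 ≤ 2 / Real.pi := by
    rw [div_le_div_iff₀ two_pos Real.pi_pos]; linarith [Real.pi_le_four]
  nlinarith [mul_le_mul_of_nonneg_right hpi hw₀]

lemma mul_sq_le_mul_turning_defect {κ μ w : ℝ} (hκ : |κ| ≤ K) (hμ : m₀ ≤ μ) (hm₀ : 0 ≤ m₀)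
    (hw : |w| ≤ 1) (hwK : |w| * K ≤ m₀ / 2) :
    m₀ / 4 * w ^ 2 ≤ w * (κ * (Real.cos w - 1) + μ * Real.sin w) := by
  have hcos : 1 - Real.cos w ≤ w ^ 2 / 2 := by linarith [Real.one_sub_sq_div_two_le_cos (x := w)]
  have hsin := sq_div_two_le_mul_sin hw
  have hκw : w * κ * (1 - Real.cos w) ≤ m₀ / 2 * (w ^ 2 / 2) := by
    refine mul_le_mul ?_ hcos (by linarith [Real.cos_le_one w]) (by linarith)
    calc w * κ ≤ |w| * |κ| := (le_abs_self _).trans (abs_mul w κ).le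
      _ ≤ |w| * K := mul_le_mul_of_nonneg_left hκ (abs_nonneg w)
      _ ≤ m₀ / 2 := hwK
  have hμw : m₀ * (w ^ 2 / 2) ≤ μ * (w * Real.sin w) :=
    mul_le_mul hμ hsin (by positivity) (hm₀.trans hμ)
  linarith

lemma abs_turning_defect_le {κ μ w : ℝ} (hκ : |κ| ≤ K) (hμ : |μ| ≤ K) :
    |κ * (Real.cos w - 1) + μ * Real.sin w| ≤ 3 * K := by
  have hcos : |Real.cos w - 1| ≤ 2 :=
    abs_le.2 ⟨by linarith [Real.neg_one_le_cos w], by linarith [Real.cos_le_one w]⟩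
  have hK : 0 ≤ K := (abs_nonneg κ).trans hκ
  calc |κ * (Real.cos w - 1) + μ * Real.sin w|
      ≤ |κ| * |Real.cos w - 1| + |μ| * |Real.sin w| := by
        rw [← abs_mul, ← abs_mul]; exact abs_add_le _ _
    _ ≤ K * 2 + K * 1 := add_le_add (mul_le_mul hκ hcos (abs_nonneg _) hK)
        (mul_le_mul hμ (Real.abs_sin_le_one w) (abs_nonneg _) hK)
    _ = 3 * K := by ring

lemma deriv_loopAbscissa_mul_le {N : ℕ} {t κ μ : ℝ} (hδ : 0 < δ) (hδ₁ : δ ≤ 1)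
    (hδK : δ * K ≤ m₀ / 2) (hm₀ : 0 ≤ m₀) (hdrift : |loopDrift N t| ≤ M) (hκ : |κ| ≤ K)
    (hμ : m₀ ≤ μ) (hμK : μ ≤ K) :
    deriv (loopAbscissa N) t * (κ * Real.cos (δ * loopOrdinate N t) +
        μ * Real.sin (δ * loopOrdinate N t)) ≤
      deriv (loopAbscissa N) t * κ + M * (3 * K) -
        m₀ * δ / 4 * (loopWeight N t * loopOrdinate N t ^ 2) := by
  set y := loopOrdinate N t
  set G := κ * (Real.cos (δ * y) - 1) + μ * Real.sin (δ * y)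
  have hδy : |δ * y| ≤ δ := by
    rw [abs_mul, abs_of_pos hδ]
    exact mul_le_of_le_one_right hδ.le abs_loopOrdinate_le_one
  have hgain : m₀ / 4 * δ * y ^ 2 ≤ y * G := by
    have := mul_sq_le_mul_turning_defect hκ hμ hm₀ (hδy.trans hδ₁)
      ((mul_le_mul_of_nonneg_right hδy ((abs_nonneg κ).trans hκ)).trans hδK)
    exact le_of_mul_le_mul_left (by linarith) hδ
  have hG : |G| ≤ 3 * K := abs_turning_defect_le hκ (abs_le.2 ⟨by linarith, hμK⟩)
  have hloss : loopDrift N t * G ≤ M * (3 * K) := calc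
    loopDrift N t * G ≤ |loopDrift N t| * |G| := (le_abs_self _).trans (abs_mul _ _).le
    _ ≤ M * (3 * K) := mul_le_mul hdrift hG (abs_nonneg _) ((abs_nonneg _).trans hdrift)
  have hweight := mul_le_mul_of_nonneg_left hgain (loopWeight_nonneg (N := N) (t := t))
  rw [deriv_loopAbscissa]
  linear_combination hloss + hweight

theorem stripTurning_loop_le {N : ℕ} (hk : ContinuousOn k (Icc 0 1))
    (hm : ContinuousOn m (Icc 0 1)) (hδ : 0 < δ) (hδ₁ : δ ≤ 1) (hδK : δ * K ≤ m₀ / 2)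
    (hm₀ : 0 ≤ m₀) (hdrift : ∀ t, |loopDrift N t| ≤ M) (hkK : ∀ t ∈ Icc (0 : ℝ) 1, |k t| ≤ K)
    (hm₀m : ∀ t ∈ Icc (0 : ℝ) 1, m₀ ≤ m t) (hmK : ∀ t ∈ Icc (0 : ℝ) 1, m t ≤ K) :
    stripTurning k m (loopAbscissa N) (fun t ↦ δ * loopOrdinate N t) ≤
      (∫ t in (0 : ℝ)..1, k t) + M * (3 * K) - m₀ * δ / 4 * (N * Real.pi / 4) := by
  have hu : ContDiff ℝ 1 (loopAbscissa N) := contDiff_loopAbscissa (n := 1)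
  have hb : Continuous (loopOrdinate N) := (contDiff_loopOrdinate (n := 1)).continuous
  have hmain_int : IntervalIntegrable (fun t ↦ deriv (loopAbscissa N) t * k (loopAbscissa N t))
      volume 0 1 := by
    simpa using (continuousOn_stripTurning_integrand hk hm hu mapsTo_loopAbscissa
      continuous_zero).intervalIntegrable_of_Icc zero_le_one
  have hgain_int : IntervalIntegrable (fun t ↦ m₀ * δ / 4 *
      (loopWeight N t * loopOrdinate N t ^ 2)) volume 0 1 :=
    (continuous_const.mul (continuous_loopWeight.mul (hb.pow 2))).intervalIntegrable _ _
  have hbase : ∫ t in (0 : ℝ)..1, deriv (loopAbscissa N) t * k (loopAbscissa N t) =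
      ∫ t in (0 : ℝ)..1, k t := by
    simpa [stripTurning] using stripTurning_zero_right (m := m) hk hu mapsTo_loopAbscissa
      (loopAbscissa_eq_self (.inl (by norm_num))) (loopAbscissa_eq_self (.inr (by norm_num)))
  calc stripTurning k m (loopAbscissa N) (fun t ↦ δ * loopOrdinate N t)
      ≤ ∫ t in (0 : ℝ)..1, (deriv (loopAbscissa N) t * k (loopAbscissa N t) + M * (3 * K) -
          m₀ * δ / 4 * (loopWeight N t * loopOrdinate N t ^ 2)) :=
        intervalIntegral.integral_mono_on zero_le_one
          ((continuousOn_stripTurning_integrand hk hm hu mapsTo_loopAbscissa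
            (hb.const_mul δ)).intervalIntegrable_of_Icc zero_le_one)
          ((hmain_int.add intervalIntegrable_const).sub hgain_int) fun t ht ↦
            have hut := mapsTo_loopAbscissa ht
            deriv_loopAbscissa_mul_le hδ hδ₁ hδK hm₀ (hdrift t) (hkK _ hut) (hm₀m _ hut) (hmK _ hut)
    _ = (∫ t in (0 : ℝ)..1, k t) + M * (3 * K) - m₀ * δ / 4 *
          ∫ t in (0 : ℝ)..1, loopWeight N t * loopOrdinate N t ^ 2 := by
        rw [intervalIntegral.integral_sub (hmain_int.add intervalIntegrable_const) hgain_int,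
          intervalIntegral.integral_add hmain_int intervalIntegrable_const, hbase,
          intervalIntegral.integral_const, intervalIntegral.integral_const_mul, sub_zero, one_smul]
    _ ≤ _ := sub_le_sub_left (mul_le_mul_of_nonneg_left mul_pi_div_four_le_integral_loop
        (by positivity)) _

theorem exists_forall_exists_stripTurning_loop_le (hk : ContinuousOn k (Icc 0 1))
    (hm : ContinuousOn m (Icc 0 1)) (hm_pos : ∀ t ∈ Icc (0 : ℝ) 1, 0 < m t) :
    ∃ δ₀ > 0, ∀ δ, 0 < δ → δ ≤ δ₀ → ∀ c : ℝ, ∃ N : ℕ,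
      stripTurning k m (loopAbscissa N) (fun t ↦ δ * loopOrdinate N t) ≤ c := by
  obtain ⟨M, hM⟩ := exists_abs_loopDrift_le
  obtain ⟨t₀, ht₀, hmin⟩ := isCompact_Icc.exists_isMinOn (nonempty_Icc.2 zero_le_one) hm
  obtain ⟨Kk, hKk⟩ := isCompact_Icc.exists_bound_of_continuousOn hk
  obtain ⟨Km, hKm⟩ := isCompact_Icc.exists_bound_of_continuousOn hm
  set K := max Kk Km
  have hm₀ : 0 < m t₀ := hm_pos t₀ ht₀
  have hmK : ∀ t ∈ Icc (0 : ℝ) 1, m t ≤ K := fun t ht ↦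
    (le_abs_self _).trans ((hKm t ht).trans (le_max_right _ _))
  have hK : 0 < K := hm₀.trans_le (hmK t₀ ht₀)
  refine ⟨min 1 (m t₀ / (2 * K)), by positivity, fun δ hδ hδ₀ c ↦ ?_⟩
  have hδK : δ * K ≤ m t₀ / 2 := by
    have := (le_div_iff₀ (by positivity)).1 (hδ₀.trans (min_le_right _ _))
    linarith
  obtain ⟨N, hN⟩ := exists_nat_ge
    (((∫ t in (0 : ℝ)..1, k t) + M * (3 * K) - c) / (m t₀ * δ / 4 * (Real.pi / 4)))
  refine ⟨N, (stripTurning_loop_le hk hm hδ (hδ₀.trans (min_le_left _ _)) hδK hm₀.le (hM N)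
    (fun t ht ↦ (hKk t ht).trans (le_max_left _ _)) (fun t ht ↦ hmin ht) hmK).trans ?_⟩
  rw [div_le_iff₀ (by positivity)] at hN
  linarith

end StripTurning

/-- The planar curve `(u, b)` is a smooth immersion, maps `[0, 1]` into the strip
`[0, 1] × [-δ, δ]` and is `t ↦ (t, 0)` outside `[1/4, 3/4]`. -/
structure IsStripProfile (u b : ℝ → ℝ) (δ : ℝ) : Prop where
  contDiff_abscissa : ContDiff ℝ (⊤ : ℕ∞) u
  contDiff_ordinate : ContDiff ℝ (⊤ : ℕ∞) b
  abscissa_eq_self : ∀ t, t ≤ 1 / 4 ∨ 3 / 4 ≤ t → u t = t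
  ordinate_eq_zero : ∀ t, t ≤ 1 / 4 ∨ 3 / 4 ≤ t → b t = 0
  mapsTo_abscissa : MapsTo u (Icc 0 1) (Icc 0 1)
  abs_ordinate_le : ∀ t, |b t| ≤ δ
  deriv_ordinate_ne_zero : ∀ t, deriv u t = 0 → deriv b t ≠ 0

lemma isStripProfile_loop (N : ℕ) {s δ : ℝ} (hs : 0 < s) (hsδ : s ≤ δ) :
    IsStripProfile (loopAbscissa N) (fun t ↦ s * loopOrdinate N t) δ where
  contDiff_abscissa := contDiff_loopAbscissa
  contDiff_ordinate := contDiff_const.mul contDiff_loopOrdinate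
  abscissa_eq_self _ := loopAbscissa_eq_self
  ordinate_eq_zero t ht := by rw [loopOrdinate_eq_zero ht, mul_zero]
  mapsTo_abscissa := mapsTo_loopAbscissa
  abs_ordinate_le t := by
    rw [abs_mul, abs_of_pos hs]
    exact (mul_le_of_le_one_right hs.le abs_loopOrdinate_le_one).trans hsδ
  deriv_ordinate_ne_zero t hu := by
    rw [deriv_const_mul_field]
    exact mul_ne_zero hs.ne' (deriv_loopOrdinate_ne_zero hu)

theorem exists_isStripProfile_stripTurning_eq {k m : ℝ → ℝ} {δ : ℝ}
    (hk : ContinuousOn k (Icc 0 1)) (hm : ContinuousOn m (Icc 0 1))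
    (hm_pos : ∀ t ∈ Icc (0 : ℝ) 1, 0 < m t) (hδ : 0 < δ) (θ : ℝ) :
    ∃ u b : ℝ → ℝ, ∃ n : ℤ, IsStripProfile u b δ ∧
      stripTurning k m u b = (∫ t in (0 : ℝ)..1, k t) - θ + n * (2 * Real.pi) := by
  obtain ⟨δ₀, hδ₀, hloop⟩ := exists_forall_exists_stripTurning_loop_le hk hm hm_pos
  set δ₁ := min δ δ₀
  have hδ₁ : 0 < δ₁ := lt_min hδ hδ₀
  obtain ⟨N, hN⟩ := hloop δ₁ hδ₁ (min_le_right _ _) ((∫ t in (0 : ℝ)..1, k t) - 2 * Real.pi)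
  set D := fun s : ℝ ↦ stripTurning k m (loopAbscissa N) fun t ↦ s * loopOrdinate N t
  have hu : ContDiff ℝ 1 (loopAbscissa N) := contDiff_loopAbscissa (n := 1)
  have hD : Continuous D := continuous_stripTurning_mul hk hm hu mapsTo_loopAbscissa
    (contDiff_loopOrdinate (n := 1)).continuous
  have hD₀ : D 0 = ∫ t in (0 : ℝ)..1, k t := by
    simp only [D, zero_mul]
    exact stripTurning_zero_right hk hu mapsTo_loopAbscissa
      (loopAbscissa_eq_self (.inl (by norm_num))) (loopAbscissa_eq_self (.inr (by norm_num)))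
  -- The representative of `θ` in `(0, 2π]` is positive, hence not attained at `s = 0`.
  have hφ := toIocMod_mem_Ioc Real.two_pi_pos 0 θ
  set φ := toIocMod Real.two_pi_pos 0 θ
  obtain ⟨s, hs, hDs⟩ : D 0 - φ ∈ D '' Icc 0 δ₁ :=
    intermediate_value_Icc' hδ₁.le hD.continuousOn ⟨by linarith [hφ.2], by linarith [hφ.1]⟩
  have hs₀ : 0 < s := hs.1.lt_of_ne (by rintro rfl; linarith [hφ.1])
  refine ⟨loopAbscissa N, fun t ↦ s * loopOrdinate N t, toIocDiv Real.two_pi_pos 0 θ,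
    isStripProfile_loop N hs₀ (hs.2.trans (min_le_left _ _)), hDs.trans ?_⟩
  have hθ := toIocMod_add_toIocDiv_zsmul Real.two_pi_pos 0 θ
  rw [zsmul_eq_mul] at hθ
  rw [hD₀]
  linear_combination -hθ

namespace IsStripProfile

variable {γ E : ℝ → E3} {u b m : ℝ → ℝ} {δ t θ : ℝ}

lemma normalPush_eq_self (hp : IsStripProfile u b δ) (ht : t ≤ 1 / 4 ∨ 3 / 4 ≤ t) :
    normalPush γ E u b t = γ t := by
  rw [normalPush_of_eq_zero (hp.ordinate_eq_zero t ht), hp.abscissa_eq_self t ht]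

theorem contDiff_normalPush (hp : IsStripProfile u b δ) (hγ : ContDiff ℝ (⊤ : ℕ∞) γ)
    (hE : ∀ t ∈ Icc (0 : ℝ) 1, ContDiffAt ℝ (⊤ : ℕ∞) E t) :
    ContDiff ℝ (⊤ : ℕ∞) (normalPush γ E u b) := by
  refine contDiff_iff_contDiffAt.2 fun t ↦ ?_
  by_cases ht : t ∈ Icc (0 : ℝ) 1
  · exact contDiffAt_normalPush hγ.contDiffAt (hE _ (hp.mapsTo_abscissa ht))
      hp.contDiff_abscissa.contDiffAt hp.contDiff_ordinate.contDiffAt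
  refine hγ.contDiffAt.congr_of_eventuallyEq ?_
  rcases not_and_or.1 ht with ht | ht
  · filter_upwards [Iio_mem_nhds (not_le.1 ht)] with s (hs : s < 0)
    exact hp.normalPush_eq_self (.inl (by linarith))
  · filter_upwards [Ioi_mem_nhds (not_le.1 ht)] with s (hs : 1 < s)
    exact hp.normalPush_eq_self (.inr (by linarith))

theorem isUnitTangentField_normalPush (hp : IsStripProfile u b δ)
    (h : IsUnitTangentField γ E 0 1) :
    IsUnitTangentField (normalPush γ E u b) (E ∘ u) 0 1 :=
  h.comp_normalPush (hp.contDiff_abscissa.of_le (mod_cast le_top))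
    (hp.contDiff_ordinate.of_le (mod_cast le_top)) hp.mapsTo_abscissa

theorem deriv_normalPush_ne_zero (hp : IsStripProfile u b δ) (h : IsUnitTangentField γ E 0 1)
    (hm : ∀ s ∈ Icc (0 : ℝ) 1, deriv γ s = m s • E s) (ht : t ∈ Icc (0 : ℝ) 1)
    (hstrip : turningRate γ E (u t) * Real.sin (b t) < m (u t) * Real.cos (b t)) :
    deriv (normalPush γ E u b) t ≠ 0 :=
  h.deriv_normalPush_ne_zero one_pos hm (hp.contDiff_abscissa.of_le (mod_cast le_top))
    (hp.contDiff_ordinate.of_le (mod_cast le_top)) hp.mapsTo_abscissa ht hstrip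
    (hp.deriv_ordinate_ne_zero t)

theorem eq_tangentRotation_of_stripTurning_eq (hp : IsStripProfile u b δ)
    (h : IsUnitTangentField γ E 0 1)
    (hm : ∀ s ∈ Icc (0 : ℝ) 1, deriv γ s = m s • E s) {n : ℤ}
    (hturn : stripTurning (turningRate γ E) m u b =
      (∫ t in (0 : ℝ)..1, turningRate γ E t) - θ + n * (2 * Real.pi))
    {v : E3} {V Vt : ℝ → E3} (hv : ⟪v, γ 0⟫ = 0) (hV : IsParTrans γ (deriv γ) 0 1 v V)
    (hVt : IsParTrans (normalPush γ E u b) (deriv (normalPush γ E u b)) 0 1 v Vt) :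
    Vt 1 = tangentRotation (γ 1) θ (V 1) := by
  have h₀ : (0 : ℝ) ≤ 1 / 4 ∨ (3 / 4 : ℝ) ≤ 0 := .inl (by norm_num)
  have h₁ : (1 : ℝ) ≤ 1 / 4 ∨ (3 / 4 : ℝ) ≤ 1 := .inr (by norm_num)
  refine hV.eq_tangentRotation_of_integral_turningRate_eq (n := n) hVt h
    (hp.isUnitTangentField_normalPush h) one_pos hv (hp.normalPush_eq_self h₀)
    (hp.normalPush_eq_self h₁) (congrArg E (hp.abscissa_eq_self 0 h₀))
    (congrArg E (hp.abscissa_eq_self 1 h₁)) ?_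
  rw [h.integral_turningRate_normalPush hm (hp.contDiff_abscissa.differentiable (by simp))
    hp.mapsTo_abscissa, hturn]

end IsStripProfile

/-- Modifying the parallel transport by adding a loop: given a smooth immersed
curve `β : [0,1] → S²`, an angle `θ` and a (relatively open) neighbourhood `U ∩ S²` of
`β([0,1])` in `S²`, there is a smooth immersed curve `β̃ : [0,1] → U ∩ S²` agreeing with `β`
near `{0,1}` such that `Π_{β̃} = R_{β(1)}^{(θ)} ∘ Π_β`. -/
theorem statement8
    (β : ℝ → E3) (hβs : ContDiff ℝ (⊤ : ℕ∞) β)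
    (hsph : ∀ t ∈ Set.Icc (0:ℝ) 1, ‖β t‖ = 1)
    (himm : ∀ t ∈ Set.Icc (0:ℝ) 1, deriv β t ≠ 0)
    (θ : ℝ) (U : Set E3) (hU : IsOpen U) (hUnbhd : β '' Set.Icc 0 1 ⊆ U) :
    ∃ βt : ℝ → E3, ContDiff ℝ (⊤ : ℕ∞) βt ∧
      (∀ t ∈ Set.Icc (0:ℝ) 1, ‖βt t‖ = 1 ∧ βt t ∈ U ∧ deriv βt t ≠ 0) ∧
      (∃ ε > (0:ℝ), ∀ t ∈ Set.Icc (0:ℝ) 1, (t < ε ∨ 1 - ε < t) → βt t = β t) ∧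
      (∀ (v : E3) (V Vt : ℝ → E3), ⟪v, β 0⟫ = 0 →
        IsParTrans β (deriv β) 0 1 v V → IsParTrans βt (deriv βt) 0 1 v Vt →
        Vt 1 = Real.cos θ • V 1 + Real.sin θ • cross3 (β 1) (V 1)) := by
  have hT := isUnitTangentField_unitTangent hβs one_pos hsph himm
  have hβT : ∀ t ∈ Icc (0 : ℝ) 1, deriv β t = ‖deriv β t‖ • unitTangent β t := fun t ht ↦
    deriv_eq_norm_smul_unitTangent (himm t ht)
  have hspeed : Continuous fun t ↦ ‖deriv β t‖ := (hβs.continuous_deriv (by simp)).norm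
  have hspeed_pos : ∀ t ∈ Icc (0 : ℝ) 1, 0 < ‖deriv β t‖ := fun t ht ↦ norm_pos_iff.2 (himm t ht)
  obtain ⟨δ, hδ, hstrip⟩ := hT.exists_uniform_strip hU (image_subset_iff.1 hUnbhd)
    (fun _ _ ↦ hspeed.continuousAt) hspeed_pos
  obtain ⟨u, b, n, hp, hturn⟩ := exists_isStripProfile_stripTurning_eq
    (fun t ht ↦ (hT.continuousAt_turningRate ht).continuousWithinAt) hspeed.continuousOn
    hspeed_pos hδ θ
  refine ⟨normalPush β (unitTangent β) u b,
    hp.contDiff_normalPush hβs fun t ht ↦ contDiffAt_unitTangent hβs (himm t ht),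
    fun t ht ↦ ?_, ⟨1 / 4, by norm_num, fun t _ ht ↦ hp.normalPush_eq_self ?_⟩,
    fun v V Vt hv hV hVt ↦ hp.eq_tangentRotation_of_stripTurning_eq hT hβT hturn hv hV hVt⟩
  · have hin := hstrip (b t) (hp.abs_ordinate_le t) (u t) (hp.mapsTo_abscissa ht)
    exact ⟨(hp.isUnitTangentField_normalPush hT).norm_curve t ht, hin.1,
      hp.deriv_normalPush_ne_zero hT hβT ht hin.2⟩
  · exact ht.imp le_of_lt fun h ↦ by linarith
end
end
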